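/- Let α,β > −1/2 with β − α > −3, and let 0 < ε < π/2. Then there exist constants c⁽¹⁾ > 0 depending only on α,β and C > 0 depending only on ε,α,β such that for every positive integer L and every θ with ε ≤ θ < π − c⁽¹⁾/L, setting L̃ := L + (α+β+2)/2 and θ' := π − θ, |v_L^{(α,β)}(1,cos θ) − ((−1)^L 2^{−(α+β+1)}/Γ(α+1)) L̃^{α+1/2} m_{β,α+1}(θ') [cos ω_β(L̃θ') + L̃^{−1} F^{(2)}_{β,α+1}(θ') cos ω_{β+1}(L̃θ')]| ≤ C (2^{−(α+β+1)}/Γ(α+1)) L̃^{α+1/2} m_{β,α+1}(θ') (L^{û(β)} θ'^{ν̂(β)} + L^{−2} θ'^{−2}), where F^{(2)}_{γ,η}(θ) := ((η²−γ²)/4) tan(θ/2) − ((4γ²−1)/8) cot θ, û(γ) := −2 + frac(γ+1/2) (frac denotes fractional part), and ν̂(γ) := γ+5/2 if γ < 1/2 and ν̂(γ) := γ+1/2 if γ ≥ 1/2. -/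

import Mathlib

open MeasureTheory Real
open scoped ENNReal NNReal

/-- The classical Jacobi polynomial `P_n^{(a,b)}` (hypergeometric representation,
normalised so that `P_n^{(a,b)}(1) = Γ(n+a+1)/(Γ(n+1)Γ(a+1))`). -/
noncomputable def jacobiP (a b : ℝ) (n : ℕ) (x : ℝ) : ℝ :=
  ∑ s ∈ Finset.range (n + 1),
    (Real.Gamma ((n : ℝ) + a + 1) /
        (Real.Gamma ((s : ℝ) + a + 1) * (Nat.factorial (n - s) : ℝ))) *
      (Real.Gamma ((n : ℝ) + b + 1) /
        (Real.Gamma ((n : ℝ) - (s : ℝ) + b + 1) * (Nat.factorial s : ℝ))) *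
      ((x - 1) / 2) ^ s * ((x + 1) / 2) ^ (n - s)

/-- `M_ℓ^{(a,b)}`, the `L₂(w_{a,b})` normalisation constant of `P_ℓ^{(a,b)}`. -/
noncomputable def jacobiM (a b : ℝ) (ℓ : ℕ) : ℝ :=
  (2 : ℝ) ^ (a + b + 1) / (2 * (ℓ : ℝ) + a + b + 1) *
    (Real.Gamma ((ℓ : ℝ) + a + 1) * Real.Gamma ((ℓ : ℝ) + b + 1)) /
    (Real.Gamma ((ℓ : ℝ) + 1) * Real.Gamma ((ℓ : ℝ) + a + b + 1))

/-- The generalised Dirichlet kernel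
`v_L^{(a,b)}(t,s) = Σ_{ℓ=0}^{L} (M_ℓ^{(a,b)})⁻¹ P_ℓ^{(a,b)}(t) P_ℓ^{(a,b)}(s)`. -/
noncomputable def dirichletJ (a b : ℝ) (L : ℕ) (t s : ℝ) : ℝ :=
  ∑ ℓ ∈ Finset.range (L + 1), (jacobiM a b ℓ)⁻¹ * jacobiP a b ℓ t * jacobiP a b ℓ s

/-- The filtered Jacobi kernel
`v_{L,g}^{(a,b)}(t,s) = Σ_{ℓ=0}^{2L−1} g(ℓ/L) (M_ℓ^{(a,b)})⁻¹ P_ℓ^{(a,b)}(t) P_ℓ^{(a,b)}(s)`. -/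
noncomputable def filteredJ (a b : ℝ) (g : ℝ → ℝ) (L : ℕ) (t s : ℝ) : ℝ :=
  ∑ ℓ ∈ Finset.range (2 * L),
    g ((ℓ : ℝ) / (L : ℝ)) * (jacobiM a b ℓ)⁻¹ * jacobiP a b ℓ t * jacobiP a b ℓ s

/-- `Z(d,ℓ)`, the dimension of the space of spherical harmonics of degree `ℓ` on `S^d`. -/
noncomputable def Zdim (d ℓ : ℕ) : ℝ :=
  (2 * (ℓ : ℝ) + (d : ℝ) - 1) * Real.Gamma ((ℓ : ℝ) + (d : ℝ) - 1) /
    (Real.Gamma (d : ℝ) * Real.Gamma ((ℓ : ℝ) + 1))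

/-- The normalised Legendre polynomial `P_ℓ^{(d+1)}` for `S^d`. -/
noncomputable def normLegendre (d ℓ : ℕ) (t : ℝ) : ℝ :=
  jacobiP (((d : ℝ) - 2) / 2) (((d : ℝ) - 2) / 2) ℓ t /
    jacobiP (((d : ℝ) - 2) / 2) (((d : ℝ) - 2) / 2) ℓ 1

/-- The Dirichlet kernel on `S^d`: `v_L^{(d)}(t) = Σ_{ℓ=0}^L Z(d,ℓ) P_ℓ^{(d+1)}(t)`. -/
noncomputable def sphDirichlet (d L : ℕ) (t : ℝ) : ℝ :=
  ∑ ℓ ∈ Finset.range (L + 1), Zdim d ℓ * normLegendre d ℓ t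

/-- The filtered kernel on `S^d`: `v_{L,g}^{(d)}(t) = Σ_{ℓ=0}^∞ g(ℓ/L) Z(d,ℓ) P_ℓ^{(d+1)}(t)`. -/
noncomputable def sphFiltered (d : ℕ) (g : ℝ → ℝ) (L : ℕ) (t : ℝ) : ℝ :=
  ∑' ℓ : ℕ, g ((ℓ : ℝ) / (L : ℝ)) * Zdim d ℓ * normLegendre d ℓ t

/-- The surface area `|S^n| = 2π^{(n+1)/2}/Γ((n+1)/2)` of the unit sphere `S^n`. -/
noncomputable def sphereArea (n : ℕ) : ℝ :=
  2 * Real.pi ^ (((n : ℝ) + 1) / 2) / Real.Gamma (((n : ℝ) + 1) / 2)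

/-- `m_{a,b}(θ) = π^{−1/2} (sin(θ/2))^{−a−1/2} (cos(θ/2))^{−b−1/2}`. -/
noncomputable def mAB (a b θ : ℝ) : ℝ :=
  Real.pi ^ (-(1 / 2 : ℝ)) * Real.sin (θ / 2) ^ (-a - 1 / 2) *
    Real.cos (θ / 2) ^ (-b - 1 / 2)

/-- `ω_γ(z) = z − γπ/2 − π/4`. -/
noncomputable def omegaA (γ z : ℝ) : ℝ := z - γ * Real.pi / 2 - Real.pi / 4

/-- `F^{(2)}_{a,b}(θ) = ((b²−a²)/4) tan(θ/2) − ((4a²−1)/8) cot θ`. -/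
noncomputable def F2fn (a b θ : ℝ) : ℝ :=
  (b ^ 2 - a ^ 2) / 4 * Real.tan (θ / 2) - (4 * a ^ 2 - 1) / 8 * (Real.cos θ / Real.sin θ)

/-- `û(a) = −2 + frac(a + 1/2)`. -/
noncomputable def uHat (a : ℝ) : ℝ := -2 + Int.fract (a + 1 / 2)

/-- `ν̂(a) = a + 5/2` if `a < 1/2`, and `a + 1/2` if `a ≥ 1/2`. -/
noncomputable def nuHat (a : ℝ) : ℝ := if a < 1 / 2 then a + 5 / 2 else a + 1 / 2

/-!
The sum defining `v_L^{(α,β)}(1,·)` telescopes to a Gamma factor times `P_L^{(α+1,β)}`, which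
reflection turns into `P_L^{(β,α+1)}(cos φ)` with `φ = π - θ`.  Multiplying by
`sin(φ/2)^{a+1/2} cos(φ/2)^{b+1/2}` removes the first-order term of Jacobi's equation, and what
remains is `u'' + (N² + q) u = 0` with `N = n + (a+b+1)/2` and a potential `q` that is at most of
order `φ⁻²` at `φ = 0`.

The two-term approximation satisfies the same equation up to a defect of order `N⁻¹ φ⁻³`, so by
Grönwall's inequality, run from `φ = π/2` outwards, it stays within `O((Nφ)⁻²)` of a solution which
it matches at `π/2` up to `O(N⁻²)`.  That match comes from Rodrigues' formula: at `cos φ = 0` it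
expresses `P_n` as an integral of `n`-th powers over a circle, which Laplace's method evaluates.
-/

section BinaryForm

/-- The binary form `∑_{i+j=n} f i j Xⁱ Yʲ` of degree `n`; the Jacobi polynomials are such forms in
`X = (x - 1) / 2` and `Y = (x + 1) / 2`. -/
noncomputable def binaryForm (f : ℕ → ℕ → ℝ) (n : ℕ) (X Y : ℝ) : ℝ :=
  ∑ p ∈ Finset.HasAntidiagonal.antidiagonal n, f p.1 p.2 * (X ^ p.1 * Y ^ p.2)

lemma binaryForm_congr {f g : ℕ → ℕ → ℝ} {n : ℕ} (h : ∀ i j, i + j = n → f i j = g i j)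
    (X Y : ℝ) : binaryForm f n X Y = binaryForm g n X Y :=
  Finset.sum_congr rfl fun p hp => by rw [h p.1 p.2 (Finset.HasAntidiagonal.mem_antidiagonal.1 hp)]

lemma binaryForm_swap (f : ℕ → ℕ → ℝ) (n : ℕ) (X Y : ℝ) :
    binaryForm (fun i j => f j i) n X Y = binaryForm f n Y X := by
  unfold binaryForm
  rw [← Finset.Nat.sum_antidiagonal_swap]
  exact Finset.sum_congr rfl fun p _ => by simp only [Prod.fst_swap, Prod.snd_swap]; ring

lemma binaryForm_neg_neg (f : ℕ → ℕ → ℝ) (n : ℕ) (X Y : ℝ) :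
    binaryForm f n (-X) (-Y) = (-1) ^ n * binaryForm f n X Y := by
  unfold binaryForm
  rw [Finset.mul_sum]
  refine Finset.sum_congr rfl fun p hp => ?_
  rw [neg_pow X, neg_pow Y, ← Finset.HasAntidiagonal.mem_antidiagonal.1 hp, pow_add]
  ring

lemma binaryForm_add (f g : ℕ → ℕ → ℝ) (n : ℕ) (X Y : ℝ) :
    binaryForm f n X Y + binaryForm g n X Y = binaryForm (fun i j => f i j + g i j) n X Y := by
  simp only [binaryForm, ← Finset.sum_add_distrib, add_mul]

lemma const_mul_binaryForm (c : ℝ) (f : ℕ → ℕ → ℝ) (n : ℕ) (X Y : ℝ) :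
    c * binaryForm f n X Y = binaryForm (fun i j => c * f i j) n X Y := by
  simp only [binaryForm, Finset.mul_sum, mul_assoc]

lemma left_mul_binaryForm {f : ℕ → ℕ → ℝ} (hf : ∀ j, f 0 j = 0) (n : ℕ) (X Y : ℝ) :
    X * binaryForm (fun i j => f (i + 1) j) n X Y = binaryForm f (n + 1) X Y := by
  simp only [binaryForm, Finset.Nat.sum_antidiagonal_succ, hf, zero_mul, zero_add, Finset.mul_sum]
  exact Finset.sum_congr rfl fun p _ => by ring

lemma right_mul_binaryForm {f : ℕ → ℕ → ℝ} (hf : ∀ i, f i 0 = 0) (n : ℕ) (X Y : ℝ) :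
    Y * binaryForm (fun i j => f i (j + 1)) n X Y = binaryForm f (n + 1) X Y := by
  rw [← binaryForm_swap f, ← left_mul_binaryForm hf, binaryForm_swap fun i j => f i (j + 1)]

lemma hasDerivAt_binaryForm (f : ℕ → ℕ → ℝ) (n : ℕ) (x : ℝ) :
    HasDerivAt (fun x => binaryForm f (n + 1) ((x - 1) / 2) ((x + 1) / 2))
      (binaryForm (fun i j => (((i : ℝ) + 1) * f (i + 1) j + ((j : ℝ) + 1) * f i (j + 1)) / 2) n
        ((x - 1) / 2) ((x + 1) / 2)) x := by
  have hX : HasDerivAt (fun x : ℝ => (x - 1) / 2) (1 / 2) x :=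
    ((hasDerivAt_id x).sub_const 1).div_const 2
  have hY : HasDerivAt (fun x : ℝ => (x + 1) / 2) (1 / 2) x :=
    ((hasDerivAt_id x).add_const 1).div_const 2
  refine (HasDerivAt.fun_sum fun p _ =>
    ((hX.pow p.1).mul (hY.pow p.2)).const_mul (f p.1 p.2)).congr_deriv ?_
  simp only [mul_add (f _ _), Finset.sum_add_distrib, binaryForm, add_div (_ * _), add_mul (_ / _)]
  congr 1
  · rw [Finset.Nat.sum_antidiagonal_succ]
    simp only [Nat.cast_zero, zero_mul, mul_zero, zero_add]
    exact Finset.sum_congr rfl fun p _ => by simp [Pi.pow_apply]; ring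
  · rw [Finset.Nat.sum_antidiagonal_succ']
    simp only [Nat.cast_zero, zero_mul, mul_zero, zero_add]
    exact Finset.sum_congr rfl fun p _ => by simp [Pi.pow_apply]; ring

-- Euler's `X ∂F/∂X = ∑ i f i j Xⁱ Yʲ` and `Y ∂F/∂Y = ∑ j f i j Xⁱ Yʲ`, where `4XY = x² - 1`.
lemma binaryForm_euler {f : ℕ → ℕ → ℝ} {n : ℕ} {x F' : ℝ}
    (hF : HasDerivAt (fun x => binaryForm f n ((x - 1) / 2) ((x + 1) / 2)) F' x) :
    (x ^ 2 - 1) / 2 * F' =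
      (x + 1) / 2 * binaryForm (fun i j => i * f i j) n ((x - 1) / 2) ((x + 1) / 2) +
        (x - 1) / 2 * binaryForm (fun i j => j * f i j) n ((x - 1) / 2) ((x + 1) / 2) := by
  rcases n with - | n
  · simp only [binaryForm, Finset.Nat.antidiagonal_zero, Finset.sum_singleton, pow_zero] at hF ⊢
    simp [hF.unique (hasDerivAt_const x _)]
  · rw [hF.unique (hasDerivAt_binaryForm f n x),
      ← left_mul_binaryForm (f := fun i j => i * f i j) (by simp),
      ← right_mul_binaryForm (f := fun i j => j * f i j) (by simp)]
    simp only [← binaryForm_add, div_eq_inv_mul _ (2 : ℝ), ← const_mul_binaryForm]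
    push_cast
    ring

end BinaryForm

section JacobiAlgebra

/-- The coefficient of `((x - 1) / 2) ^ i * ((x + 1) / 2) ^ j` in the Jacobi polynomial of
degree `i + j`. -/
noncomputable def jacobiCoeff (a b : ℝ) (i j : ℕ) : ℝ :=
  Gamma (i + j + a + 1) / (Gamma (i + a + 1) * j.factorial) *
    (Gamma (i + j + b + 1) / (Gamma (j + b + 1) * i.factorial))

lemma jacobiP_eq_binaryForm (a b : ℝ) (n : ℕ) (x : ℝ) :
    jacobiP a b n x = binaryForm (jacobiCoeff a b) n ((x - 1) / 2) ((x + 1) / 2) := by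
  unfold jacobiP binaryForm jacobiCoeff
  rw [Finset.Nat.sum_antidiagonal_eq_sum_range_succ_mk]
  refine Finset.sum_congr rfl fun s hs => ?_
  have hs' : s ≤ n := Nat.lt_succ_iff.1 (Finset.mem_range.1 hs)
  rw [Nat.cast_sub hs', add_sub_cancel]
  ring

lemma jacobiCoeff_swap (a b : ℝ) (i j : ℕ) : jacobiCoeff a b j i = jacobiCoeff b a i j := by
  unfold jacobiCoeff
  rw [add_comm (j : ℝ) i, mul_comm]

lemma jacobiP_neg (a b : ℝ) (n : ℕ) (x : ℝ) :
    jacobiP a b n (-x) = (-1) ^ n * jacobiP b a n x := by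
  rw [jacobiP_eq_binaryForm, jacobiP_eq_binaryForm,
    show (-x - 1) / 2 = -((x + 1) / 2) by ring, show (-x + 1) / 2 = -((x - 1) / 2) by ring,
    binaryForm_neg_neg, ← binaryForm_swap, funext₂ fun i j => jacobiCoeff_swap a b i j]

variable {a b : ℝ}

lemma Gamma_natCast_add_ne_zero (ha : -1 < a) (n : ℕ) : Gamma (n + a + 1) ≠ 0 :=
  (Gamma_pos_of_pos (by linarith [n.cast_nonneg (α := ℝ)])).ne'

lemma Gamma_natCast_succ_add (ha : -1 < a) (n : ℕ) :
    Gamma (n + a + 1 + 1) = (n + a + 1) * Gamma (n + a + 1) :=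
  Gamma_add_one (by linarith [n.cast_nonneg (α := ℝ)])

lemma succ_mul_jacobiCoeff_succ_left (hb : -1 < b) (i j : ℕ) :
    ((i : ℝ) + 1) * jacobiCoeff a b (i + 1) j =
      (j + b + 1) * jacobiCoeff (a + 1) (b + 1) i j := by
  unfold jacobiCoeff
  have hj := Gamma_natCast_add_ne_zero hb j
  have hj0 : (j : ℝ) + b + 1 ≠ 0 := by linarith [j.cast_nonneg (α := ℝ)]
  rw [show (j : ℝ) + (b + 1) + 1 = j + b + 1 + 1 by ring, Gamma_natCast_succ_add hb]
  push_cast [Nat.factorial_succ]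
  rw [show (i : ℝ) + 1 + j + a + 1 = i + j + (a + 1) + 1 by ring,
    show (i : ℝ) + 1 + j + b + 1 = i + j + (b + 1) + 1 by ring,
    show (i : ℝ) + 1 + a + 1 = i + (a + 1) + 1 by ring]
  field_simp

lemma succ_mul_jacobiCoeff_succ_right (ha : -1 < a) (i j : ℕ) :
    ((j : ℝ) + 1) * jacobiCoeff a b i (j + 1) =
      (i + a + 1) * jacobiCoeff (a + 1) (b + 1) i j := by
  rw [jacobiCoeff_swap, succ_mul_jacobiCoeff_succ_left ha, jacobiCoeff_swap]

lemma jacobiCoeff_add_one_left (ha : -1 < a) (i j : ℕ) :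
    ((i : ℝ) + a + 1) * jacobiCoeff (a + 1) b i j = (i + j + a + 1) * jacobiCoeff a b i j := by
  unfold jacobiCoeff
  have hi := Gamma_natCast_add_ne_zero ha i
  have hi0 : (i : ℝ) + a + 1 ≠ 0 := by linarith [i.cast_nonneg (α := ℝ)]
  have hij := Gamma_natCast_succ_add ha (i + j)
  push_cast at hij
  rw [show (i : ℝ) + (a + 1) + 1 = i + a + 1 + 1 by ring, Gamma_natCast_succ_add ha,
    show (i : ℝ) + j + (a + 1) + 1 = i + j + a + 1 + 1 by ring, hij]
  field_simp

lemma succ_mul_jacobiCoeff_succ_left' (hb : -1 < b) (i j : ℕ) :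
    ((i : ℝ) + 1) * jacobiCoeff a b (i + 1) j =
      (i + j + b + 1) * jacobiCoeff (a + 1) b i j := by
  rw [succ_mul_jacobiCoeff_succ_left hb, jacobiCoeff_swap, jacobiCoeff_add_one_left hb,
    jacobiCoeff_swap]
  ring

lemma succ_mul_jacobiCoeff_succ_right' (ha : -1 < a) (hb : -1 < b) (i j : ℕ) :
    ((j : ℝ) + 1) * (j + b + 1) * jacobiCoeff a b i (j + 1) =
      (i + j + b + 1) * (i + a + 1) * jacobiCoeff (a + 1) b i j := by
  have h := jacobiCoeff_add_one_left (b := a + 1) hb j i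
  rw [jacobiCoeff_swap (b + 1), jacobiCoeff_swap b] at h
  linear_combination (j + b + 1) * succ_mul_jacobiCoeff_succ_right (b := b) ha i j +
    (i + a + 1) * h

lemma hasDerivAt_jacobiP (ha : -1 < a) (hb : -1 < b) (n : ℕ) (x : ℝ) :
    HasDerivAt (jacobiP a b (n + 1))
      ((n + a + b + 2) / 2 * jacobiP (a + 1) (b + 1) n x) x := by
  rw [funext (jacobiP_eq_binaryForm a b (n + 1)), jacobiP_eq_binaryForm, const_mul_binaryForm]
  refine (hasDerivAt_binaryForm _ n x).congr_deriv (binaryForm_congr (fun i j hij => ?_) _ _)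
  have hn : (i : ℝ) + j = n := mod_cast hij
  rw [← hn]
  linear_combination (succ_mul_jacobiCoeff_succ_left (a := a) hb i j +
    succ_mul_jacobiCoeff_succ_right (b := b) ha i j) / 2

lemma differentiable_jacobiP (a b : ℝ) (n : ℕ) : Differentiable ℝ (jacobiP a b n) := by
  unfold jacobiP
  fun_prop

-- Rodrigues-type relation:
-- `d/dx [(1-x)^(a+1) (1+x)^(b+1) P_n^(a+1,b+1)] = -2(n+1) (1-x)^a (1+x)^b P_(n+1)^(a,b)`.
lemma jacobiP_adjoint_deriv (ha : -1 < a) (hb : -1 < b) (n : ℕ) {x Q' : ℝ}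
    (hQ : HasDerivAt (jacobiP (a + 1) (b + 1) n) Q' x) :
    ((a + 1) * ((x + 1) / 2) + (b + 1) * ((x - 1) / 2)) * jacobiP (a + 1) (b + 1) n x +
      (x ^ 2 - 1) / 2 * Q' = (n + 1) * jacobiP a b (n + 1) x := by
  set c := jacobiCoeff (a + 1) (b + 1) with hc
  set X := (x - 1) / 2 with hX
  set Y := (x + 1) / 2 with hY
  have hl : X * binaryForm (fun i j => (j + b + 1) * c i j) n X Y =
      binaryForm (fun i j => i * jacobiCoeff a b i j) (n + 1) X Y := by
    rw [← left_mul_binaryForm (by simp)]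
    push_cast
    simp only [succ_mul_jacobiCoeff_succ_left hb, hc]
  have hr : Y * binaryForm (fun i j => (i + a + 1) * c i j) n X Y =
      binaryForm (fun i j => j * jacobiCoeff a b i j) (n + 1) X Y := by
    rw [← right_mul_binaryForm (by simp)]
    push_cast
    simp only [succ_mul_jacobiCoeff_succ_right ha, hc]
  have hsum : binaryForm (fun i j => i * jacobiCoeff a b i j) (n + 1) X Y +
      binaryForm (fun i j => j * jacobiCoeff a b i j) (n + 1) X Y =
      (n + 1) * binaryForm (jacobiCoeff a b) (n + 1) X Y := by
    rw [binaryForm_add, const_mul_binaryForm]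
    refine binaryForm_congr (fun i j hij => ?_) _ _
    rw [← add_mul]
    exact_mod_cast congrArg (fun k : ℕ => (k : ℝ) * jacobiCoeff a b i j) hij
  rw [funext (jacobiP_eq_binaryForm (a + 1) (b + 1) n)] at hQ
  rw [binaryForm_euler hQ, jacobiP_eq_binaryForm, jacobiP_eq_binaryForm, ← hsum, ← hl, ← hr]
  simp only [add_assoc, add_mul, ← binaryForm_add, ← const_mul_binaryForm, ← hc, ← hX, ← hY]
  ring

lemma jacobiP_contiguous (ha : -1 < a) (hb : -1 < b) (n : ℕ) (x : ℝ) :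
    (2 * n + a + b + 3) * jacobiP a b (n + 1) x =
      (n + a + b + 2) * jacobiP (a + 1) b (n + 1) x - (n + b + 1) * jacobiP (a + 1) b n x := by
  set X := (x - 1) / 2 with hX
  set Y := (x + 1) / 2 with hY
  have hl : X * binaryForm (fun i j => (i + j + b + 1) * jacobiCoeff (a + 1) b i j) n X Y =
      binaryForm (fun i j => i * jacobiCoeff a b i j) (n + 1) X Y := by
    rw [← left_mul_binaryForm (by simp)]
    push_cast
    simp only [succ_mul_jacobiCoeff_succ_left' hb]
  have hr : Y * binaryForm (fun i j => (i + j + b + 1) * jacobiCoeff (a + 1) b i j) n X Y =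
      binaryForm (fun i j => j * (j + b) / (i + a + 1) * jacobiCoeff a b i j) (n + 1) X Y := by
    rw [← right_mul_binaryForm (by simp)]
    congr 2
    ext i j
    have hi : (i : ℝ) + a + 1 ≠ 0 := by linarith [i.cast_nonneg (α := ℝ)]
    push_cast
    field_simp
    linear_combination -succ_mul_jacobiCoeff_succ_right' ha hb i j
  have hn : (n + b + 1) * jacobiP (a + 1) b n x =
      (Y - X) * binaryForm (fun i j => (i + j + b + 1) * jacobiCoeff (a + 1) b i j) n X Y := by
    rw [jacobiP_eq_binaryForm, const_mul_binaryForm, show Y - X = 1 by rw [hX, hY]; ring, one_mul]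
    exact binaryForm_congr (fun i j hij => by rw [← hij, Nat.cast_add]) _ _
  rw [hn, sub_mul, hl, hr, jacobiP_eq_binaryForm, jacobiP_eq_binaryForm, ← hX, ← hY,
    sub_sub_eq_add_sub, eq_sub_iff_add_eq]
  simp only [const_mul_binaryForm, binaryForm_add]
  refine binaryForm_congr (fun i j hij => ?_) _ _
  have hi : (i : ℝ) + a + 1 ≠ 0 := by linarith [i.cast_nonneg (α := ℝ)]
  have hn : (i : ℝ) + j = n + 1 := mod_cast hij
  have h1 := eq_div_of_mul_eq hi ((mul_comm _ _).trans (jacobiCoeff_add_one_left (b := b) ha i j))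
  rw [h1, show (n : ℝ) = i + j - 1 by linarith]
  field_simp
  ring

lemma jacobiP_one (hb : -1 < b) (n : ℕ) :
    jacobiP a b n 1 = Gamma (n + a + 1) / (Gamma (a + 1) * n.factorial) := by
  have hn := Gamma_natCast_add_ne_zero hb n
  rw [jacobiP_eq_binaryForm, binaryForm, Finset.sum_eq_single_of_mem (0, n)
    (Finset.HasAntidiagonal.mem_antidiagonal.2 (zero_add n)) fun p hp hp0 => ?_]
  · simp [jacobiCoeff, hn]
  · have h1 : p.1 ≠ 0 := by
      rintro h
      exact hp0 (Prod.ext h (by simpa [h] using Finset.HasAntidiagonal.mem_antidiagonal.1 hp))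
    simp [h1]

end JacobiAlgebra

section DirichletKernel

variable {a b : ℝ}

lemma jacobiP_zero (ha : -1 < a) (hb : -1 < b) (x : ℝ) : jacobiP a b 0 x = 1 := by
  have h1 := Gamma_natCast_add_ne_zero ha 0
  have h2 := Gamma_natCast_add_ne_zero hb 0
  simp only [Nat.cast_zero, zero_add] at h1 h2
  simp [jacobiP, h1, h2]

lemma jacobiM_inv_mul_jacobiP_one (ha : -1 < a) (hb : -1 < b) (ℓ : ℕ) :
    (jacobiM a b ℓ)⁻¹ * jacobiP a b ℓ 1 = 2 ^ (-(a + b + 1)) / Gamma (a + 1) *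
      ((2 * ℓ + a + b + 1) * Gamma (ℓ + a + b + 1) / Gamma (ℓ + b + 1)) := by
  have hℓ := Gamma_natCast_add_ne_zero ha ℓ
  rw [jacobiP_one hb, jacobiM, Gamma_nat_eq_factorial, rpow_neg zero_le_two]
  simp only [mul_inv, div_eq_mul_inv, inv_inv]
  field_simp

-- The sum telescopes because of the contiguous relation.
lemma dirichletJ_one (ha : -1 < a) (hb : -1 < b) (hab : a + b + 1 ≠ 0) (L : ℕ) (x : ℝ) :
    dirichletJ a b L 1 x = 2 ^ (-(a + b + 1)) / Gamma (a + 1) *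
      (Gamma (L + a + b + 2) / Gamma (L + b + 1) * jacobiP (a + 1) b L x) := by
  simp only [dirichletJ, jacobiM_inv_mul_jacobiP_one ha hb]
  induction L with
  | zero =>
    rw [zero_add, Finset.sum_range_one, jacobiP_zero ha hb, jacobiP_zero (by linarith) hb]
    simp only [Nat.cast_zero, mul_zero, zero_add]
    rw [← Gamma_add_one hab]
    ring_nf
  | succ L ih =>
    rw [Finset.sum_range_succ, ih, mul_assoc, ← mul_add]
    push_cast
    rw [show (L : ℝ) + 1 + a + b + 2 = L + a + b + 2 + 1 by ring,
      show (L : ℝ) + 1 + a + b + 1 = L + a + b + 2 by ring,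
      show (L : ℝ) + 1 + b + 1 = L + b + 1 + 1 by ring,
      Gamma_add_one (s := L + a + b + 2) (by linarith [L.cast_nonneg (α := ℝ)]),
      Gamma_natCast_succ_add hb]
    have h1 := Gamma_natCast_add_ne_zero hb L
    have h2 : (L : ℝ) + b + 1 ≠ 0 := by linarith [L.cast_nonneg (α := ℝ)]
    field_simp
    linear_combination (Gamma (a + 1))⁻¹ * Gamma (L + a + b + 2) * jacobiP_contiguous ha hb L x

end DirichletKernel

section LiouvilleTransform

/-- The weight `sin(φ/2)^(γ+1/2) cos(φ/2)^(η+1/2)` whose product with a Jacobi polynomial in `cos φ`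
satisfies an equation of Schrödinger type (Liouville normal form). -/
noncomputable def liouvilleWeight (γ η φ : ℝ) : ℝ :=
  sin (φ / 2) ^ (γ + 1 / 2) * cos (φ / 2) ^ (η + 1 / 2)

/-- The frequency of the oscillator equation satisfied by `liouvilleJacobi γ η n`; it is the `L̃` of
the theorem for `(γ, η, n) = (β, α + 1, L)`. -/
noncomputable def jacobiFreq (γ η : ℝ) (n : ℕ) : ℝ := n + (γ + η + 1) / 2

/-- The Jacobi polynomial in Liouville normal form. -/
noncomputable def liouvilleJacobi (γ η : ℝ) (n : ℕ) (φ : ℝ) : ℝ :=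
  liouvilleWeight γ η φ * jacobiP γ η n (cos φ)

/-- The logarithmic derivative of `liouvilleWeight`. -/
noncomputable def liouvilleLogDeriv (γ η φ : ℝ) : ℝ :=
  (γ + 1 / 2) / 2 * (cos (φ / 2) / sin (φ / 2)) - (η + 1 / 2) / 2 * (sin (φ / 2) / cos (φ / 2))

/-- The derivative of `liouvilleJacobi γ η (m + 1)`, expressed through the adjacent
family `P_m^(γ+1,η+1)`. -/
noncomputable def liouvilleJacobiDeriv (γ η : ℝ) (m : ℕ) (φ : ℝ) : ℝ :=
  liouvilleLogDeriv γ η φ * liouvilleJacobi γ η (m + 1) φ -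
    (m + γ + η + 2) * liouvilleJacobi (γ + 1) (η + 1) m φ

/-- The potential `q` of the normal form `u'' + (N² + q) u = 0`, `N = n + (γ + η + 1) / 2`. -/
noncomputable def liouvillePotential (γ η φ : ℝ) : ℝ :=
  (1 / 4 - γ ^ 2) / 4 * (sin (φ / 2))⁻¹ ^ 2 + (1 / 4 - η ^ 2) / 4 * (cos (φ / 2))⁻¹ ^ 2

/-- The derivative of `liouvillePotential`. -/
noncomputable def liouvillePotentialDeriv (γ η φ : ℝ) : ℝ :=
  (1 / 4 - γ ^ 2) / 4 * (-cos (φ / 2) * (sin (φ / 2))⁻¹ ^ 3) +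
    (1 / 4 - η ^ 2) / 4 * (sin (φ / 2) * (cos (φ / 2))⁻¹ ^ 3)

lemma sin_half_pos {φ : ℝ} (hφ : φ ∈ Set.Ioo 0 π) : 0 < sin (φ / 2) :=
  sin_pos_of_pos_of_lt_pi (by linarith [hφ.1]) (by linarith [hφ.1, hφ.2])

lemma cos_half_pos {φ : ℝ} (hφ : φ ∈ Set.Ioo 0 π) : 0 < cos (φ / 2) :=
  cos_pos_of_mem_Ioo ⟨by linarith [hφ.1, pi_pos], by linarith [hφ.2]⟩

lemma hasDerivAt_sin_half (φ : ℝ) : HasDerivAt (fun φ => sin (φ / 2)) (cos (φ / 2) / 2) φ :=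
  ((hasDerivAt_id φ).div_const 2).sin.congr_deriv (by simp only [id]; ring)

lemma hasDerivAt_cos_half (φ : ℝ) : HasDerivAt (fun φ => cos (φ / 2)) (-sin (φ / 2) / 2) φ :=
  ((hasDerivAt_id φ).div_const 2).cos.congr_deriv (by simp only [id]; ring)

lemma sin_eq_two_mul_half (φ : ℝ) : sin φ = 2 * sin (φ / 2) * cos (φ / 2) := by
  rw [← sin_two_mul, mul_div_cancel₀ φ two_ne_zero]

lemma cos_eq_sq_half_sub_sq_half (φ : ℝ) : cos φ = cos (φ / 2) ^ 2 - sin (φ / 2) ^ 2 := by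
  rw [← cos_two_mul', mul_div_cancel₀ φ two_ne_zero]

variable {γ η φ : ℝ}

lemma hasDerivAt_liouvilleWeight (γ η : ℝ) (hφ : φ ∈ Set.Ioo 0 π) :
    HasDerivAt (liouvilleWeight γ η) (liouvilleLogDeriv γ η φ * liouvilleWeight γ η φ) φ := by
  have hs := (sin_half_pos hφ).ne'
  have hc := (cos_half_pos hφ).ne'
  refine (((hasDerivAt_sin_half φ).rpow_const (p := γ + 1 / 2) (Or.inl hs)).mul
    ((hasDerivAt_cos_half φ).rpow_const (p := η + 1 / 2) (Or.inl hc))).congr_deriv ?_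
  rw [rpow_sub_one hs, rpow_sub_one hc, liouvilleLogDeriv, liouvilleWeight]
  field_simp
  ring

lemma liouvilleWeight_add_one (γ η : ℝ) (hφ : φ ∈ Set.Ioo 0 π) :
    liouvilleWeight (γ + 1) (η + 1) φ =
      liouvilleWeight γ η φ * (sin (φ / 2) * cos (φ / 2)) := by
  rw [liouvilleWeight, liouvilleWeight, add_right_comm γ, add_right_comm η,
    rpow_add_one (sin_half_pos hφ).ne', rpow_add_one (cos_half_pos hφ).ne']
  ring

lemma hasDerivAt_liouvilleJacobi (hγ : -1 < γ) (hη : -1 < η) (m : ℕ) (hφ : φ ∈ Set.Ioo 0 π) :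
    HasDerivAt (liouvilleJacobi γ η (m + 1)) (liouvilleJacobiDeriv γ η m φ) φ := by
  refine ((hasDerivAt_liouvilleWeight γ η hφ).mul
    ((hasDerivAt_jacobiP hγ hη m (cos φ)).comp φ (hasDerivAt_cos φ))).congr_deriv ?_
  rw [liouvilleJacobiDeriv, liouvilleJacobi, liouvilleJacobi, liouvilleWeight_add_one γ η hφ,
    sin_eq_two_mul_half φ, Function.comp_apply]
  ring

lemma hasDerivAt_liouvilleJacobi_add_one (hγ : -1 < γ) (hη : -1 < η) (m : ℕ)
    (hφ : φ ∈ Set.Ioo 0 π) :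
    HasDerivAt (liouvilleJacobi (γ + 1) (η + 1) m)
      (-liouvilleLogDeriv γ η φ * liouvilleJacobi (γ + 1) (η + 1) m φ +
        (m + 1) * liouvilleJacobi γ η (m + 1) φ) φ := by
  have hs := (sin_half_pos hφ).ne'
  have hc := (cos_half_pos hφ).ne'
  have hP := ((differentiable_jacobiP (γ + 1) (η + 1) m) (cos φ)).hasDerivAt
  refine ((hasDerivAt_liouvilleWeight (γ + 1) (η + 1) hφ).mul
    (hP.comp φ (hasDerivAt_cos φ))).congr_deriv ?_
  rw [liouvilleJacobi, liouvilleJacobi, mul_left_comm _ (liouvilleWeight γ η φ),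
    ← jacobiP_adjoint_deriv hγ hη m hP, liouvilleLogDeriv, liouvilleLogDeriv,
    liouvilleWeight_add_one γ η hφ, Function.comp_apply, sin_eq_two_mul_half φ]
  have hX : (cos φ - 1) / 2 = -sin (φ / 2) ^ 2 := by
    linarith [cos_eq_sq_half_sub_sq_half φ, sin_sq_add_cos_sq (φ / 2)]
  have hY : (cos φ + 1) / 2 = cos (φ / 2) ^ 2 := by
    linarith [cos_eq_sq_half_sub_sq_half φ, sin_sq_add_cos_sq (φ / 2)]
  have hXY : (cos φ ^ 2 - 1) / 2 = -2 * (sin (φ / 2) ^ 2 * cos (φ / 2) ^ 2) := by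
    linear_combination 2 * ((cos φ - 1) / 2 * hY + cos (φ / 2) ^ 2 * hX)
  rw [hX, hY, hXY]
  field_simp
  ring

lemma hasDerivAt_liouvilleLogDeriv (γ η : ℝ) (hφ : φ ∈ Set.Ioo 0 π) :
    HasDerivAt (liouvilleLogDeriv γ η)
      (-((γ + η + 1) / 2) ^ 2 - liouvillePotential γ η φ - liouvilleLogDeriv γ η φ ^ 2) φ := by
  have hs := (sin_half_pos hφ).ne'
  have hc := (cos_half_pos hφ).ne'
  refine ((((hasDerivAt_cos_half φ).div (hasDerivAt_sin_half φ) hs).const_mul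
    ((γ + 1 / 2) / 2)).sub (((hasDerivAt_sin_half φ).div (hasDerivAt_cos_half φ) hc).const_mul
      ((η + 1 / 2) / 2))).congr_deriv ?_
  rw [liouvillePotential, liouvilleLogDeriv]
  have hsc := sin_sq_add_cos_sq (φ / 2)
  generalize sin (φ / 2) = s at *
  generalize cos (φ / 2) = c at *
  field_simp
  grind

-- The terms linear in `P_m^(γ+1,η+1)` cancel.
lemma hasDerivAt_liouvilleJacobiDeriv (hγ : -1 < γ) (hη : -1 < η) (m : ℕ)
    (hφ : φ ∈ Set.Ioo 0 π) :
    HasDerivAt (liouvilleJacobiDeriv γ η m)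
      (-(jacobiFreq γ η (m + 1) ^ 2 + liouvillePotential γ η φ) *
        liouvilleJacobi γ η (m + 1) φ) φ := by
  refine (((hasDerivAt_liouvilleLogDeriv γ η hφ).mul
    (hasDerivAt_liouvilleJacobi hγ hη m hφ)).sub
      ((hasDerivAt_liouvilleJacobi_add_one hγ hη m hφ).const_mul
        (m + γ + η + 2))).congr_deriv ?_
  rw [liouvilleJacobiDeriv, jacobiFreq]
  push_cast
  ring

lemma hasDerivAt_liouvillePotential (γ η : ℝ) (hφ : φ ∈ Set.Ioo 0 π) :
    HasDerivAt (liouvillePotential γ η) (liouvillePotentialDeriv γ η φ) φ := by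
  have hs := (sin_half_pos hφ).ne'
  have hc := (cos_half_pos hφ).ne'
  refine (((((hasDerivAt_sin_half φ).inv hs).pow 2).const_mul ((1 / 4 - γ ^ 2) / 4)).add
    ((((hasDerivAt_cos_half φ).inv hc).pow 2).const_mul ((1 / 4 - η ^ 2) / 4))).congr_deriv ?_
  simp only [liouvillePotentialDeriv, Pi.inv_apply, Nat.add_one_sub_one, pow_one]
  generalize sin (φ / 2) = s at *
  generalize cos (φ / 2) = c at *
  field_simp
  ring

lemma F2fn_eq_half_angle (γ η : ℝ) (hφ : φ ∈ Set.Ioo 0 π) :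
    F2fn γ η φ = (1 / 4 - γ ^ 2) / 4 * (cos (φ / 2) * (sin (φ / 2))⁻¹) -
      (1 / 4 - η ^ 2) / 4 * (sin (φ / 2) * (cos (φ / 2))⁻¹) := by
  have hs := (sin_half_pos hφ).ne'
  have hc := (cos_half_pos hφ).ne'
  rw [F2fn, tan_eq_sin_div_cos, sin_eq_two_mul_half φ, cos_eq_sq_half_sub_sq_half φ]
  field_simp
  ring

lemma hasDerivAt_F2fn (γ η : ℝ) (hφ : φ ∈ Set.Ioo 0 π) :
    HasDerivAt (F2fn γ η) (-liouvillePotential γ η φ / 2) φ := by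
  have hs := (sin_half_pos hφ).ne'
  have hc := (cos_half_pos hφ).ne'
  refine HasDerivAt.congr_of_eventuallyEq ?_ <| Filter.eventually_of_mem
    (isOpen_Ioo.mem_nhds hφ) fun _ => F2fn_eq_half_angle γ η
  refine ((((hasDerivAt_cos_half φ).mul ((hasDerivAt_sin_half φ).inv hs)).const_mul
    ((1 / 4 - γ ^ 2) / 4)).sub (((hasDerivAt_sin_half φ).mul
      ((hasDerivAt_cos_half φ).inv hc)).const_mul ((1 / 4 - η ^ 2) / 4))).congr_deriv ?_
  simp only [liouvillePotential, Pi.inv_apply]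
  have hsc := sin_sq_add_cos_sq (φ / 2)
  generalize sin (φ / 2) = s at *
  generalize cos (φ / 2) = c at *
  field_simp
  grind

lemma inv_sin_half_le {b t : ℝ} (hb : b < π) (ht : t ∈ Set.Ioc 0 b) :
    (sin (t / 2))⁻¹ ≤ π / cos (b / 2) / t := by
  have hb' : b ∈ Set.Ioo 0 π := ⟨ht.1.trans_le ht.2, hb⟩
  have hle := mul_le_sin (x := t / 2) (by linarith [ht.1]) (by linarith [ht.2])
  rw [inv_le_comm₀ (sin_half_pos ⟨ht.1, ht.2.trans_lt hb⟩)
    (div_pos (div_pos pi_pos (cos_half_pos hb')) ht.1), inv_div, div_div_eq_mul_div]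
  calc t * cos (b / 2) / π ≤ t * 1 / π := by gcongr; exacts [ht.1.le, cos_le_one _]
    _ = 2 / π * (t / 2) := by ring
    _ ≤ sin (t / 2) := hle

lemma inv_cos_half_le {b t : ℝ} (hb : b < π) (ht : t ∈ Set.Ioc 0 b) :
    (cos (t / 2))⁻¹ ≤ π / cos (b / 2) / t := by
  have hb' := cos_half_pos ⟨ht.1.trans_le ht.2, hb⟩
  have hle : cos (b / 2) ≤ cos (t / 2) :=
    cos_le_cos_of_nonneg_of_le_pi (by linarith [ht.1]) (by linarith [pi_pos]) (by linarith [ht.2])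
  calc (cos (t / 2))⁻¹ ≤ 1 / cos (b / 2) := by rw [one_div]; gcongr
    _ ≤ π / t / cos (b / 2) := by
      gcongr
      exact (one_le_div ht.1).2 (ht.2.trans hb.le)
    _ = π / cos (b / 2) / t := div_right_comm _ _ _

lemma abs_mul_add_mul_le {A B x y G H T : ℝ} (hA : |A| ≤ G) (hB : |B| ≤ H) (hx : |x| ≤ T)
    (hy : |y| ≤ T) : |A * x + B * y| ≤ (G + H) * T := by
  refine (abs_add_le _ _).trans ?_
  rw [abs_mul, abs_mul, add_mul]
  gcongr
  exacts [(abs_nonneg A).trans hA, (abs_nonneg B).trans hB]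

lemma abs_mul_pow_le_pow {x y T : ℝ} (hx : |x| ≤ 1) (hy : |y| ≤ T) (k : ℕ) :
    |x * y ^ k| ≤ T ^ k := by
  rw [abs_mul, abs_pow]
  exact (mul_le_of_le_one_left (by positivity) hx).trans (pow_le_pow_left₀ (abs_nonneg y) hy k)

lemma exists_liouville_bounds (γ η : ℝ) {b : ℝ} (hb0 : 0 < b) (hb : b < π) :
    ∃ B, 0 ≤ B ∧ ∀ t ∈ Set.Ioc 0 b, |F2fn γ η t| ≤ B / t ∧
      |liouvillePotential γ η t| ≤ B / t ^ 2 ∧ |liouvillePotentialDeriv γ η t| ≤ B / t ^ 3 := by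
  set G := |(1 / 4 - γ ^ 2) / 4|
  set H := |(1 / 4 - η ^ 2) / 4|
  set M := π / cos (b / 2)
  have hM1 : 1 ≤ M := (one_le_div (cos_half_pos ⟨hb0, hb⟩)).2
    ((cos_le_one _).trans (by linarith [pi_gt_three]))
  refine ⟨(G + H) * M ^ 3, by positivity, fun t ht => ?_⟩
  have ht' : t ∈ Set.Ioo 0 π := ⟨ht.1, ht.2.trans_lt hb⟩
  have hs0 := sin_half_pos ht'
  have hc0 := cos_half_pos ht'
  have hs : |(sin (t / 2))⁻¹| ≤ M / t :=
    (abs_of_pos (inv_pos.2 hs0)).trans_le (inv_sin_half_le hb ht)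
  have hc : |(cos (t / 2))⁻¹| ≤ M / t :=
    (abs_of_pos (inv_pos.2 hc0)).trans_le (inv_cos_half_le hb ht)
  have hfin : ∀ {k : ℕ}, k ≤ 3 → (G + H) * (M / t) ^ k ≤ (G + H) * M ^ 3 / t ^ k := by
    intro k hk
    rw [div_pow, ← mul_div_assoc]
    gcongr
    exact pow_nonneg ht.1.le k
  refine ⟨?_, ?_, ?_⟩
  · rw [F2fn_eq_half_angle γ η ht', sub_eq_add_neg, ← mul_neg]
    refine (abs_mul_add_mul_le le_rfl le_rfl (T := M / t) ?_ ?_).trans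
      (by simpa only [pow_one] using hfin (k := 1) (by norm_num))
    · simpa using abs_mul_pow_le_pow (abs_cos_le_one (t / 2)) hs 1
    · simpa using abs_mul_pow_le_pow (abs_sin_le_one (t / 2)) hc 1
  · refine (abs_mul_add_mul_le le_rfl le_rfl ?_ ?_).trans (hfin (k := 2) (by norm_num))
    · simpa using abs_mul_pow_le_pow (x := 1) (by simp) hs 2
    · simpa using abs_mul_pow_le_pow (x := 1) (by simp) hc 2
  · refine (abs_mul_add_mul_le le_rfl le_rfl ?_ ?_).trans (hfin le_rfl)
    · exact abs_mul_pow_le_pow (by simpa using abs_cos_le_one (t / 2)) hs 3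
    · exact abs_mul_pow_le_pow (abs_sin_le_one _) hc 3

end LiouvilleTransform

section Perturbation

lemma gronwallBound_le_exp {δ K ε x : ℝ} (hK : 0 ≤ K) (hε : 0 ≤ ε) :
    gronwallBound δ K ε x ≤ (δ + ε * x) * exp (K * x) := by
  rcases hK.eq_or_lt with rfl | hK
  · simp [gronwallBound_K0]
  have hexp : (exp (K * x) - 1) / K ≤ x * exp (K * x) := by
    rw [div_le_iff₀ hK]
    have h := mul_le_mul_of_nonneg_right (add_one_le_exp (-(K * x))) (exp_pos (K * x)).le
    rw [← exp_add, neg_add_cancel, exp_zero] at h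
    linarith
  calc gronwallBound δ K ε x = δ * exp (K * x) + ε * ((exp (K * x) - 1) / K) := by
        simp only [gronwallBound_of_K_ne_0 hK.ne']
        ring
    _ ≤ δ * exp (K * x) + ε * (x * exp (K * x)) := by gcongr
    _ = (δ + ε * x) * exp (K * x) := by ring

variable {E : Type*} [NormedAddCommGroup E] [NormedSpace ℝ E]

lemma norm_le_exp_of_norm_deriv_le_of_le {f f' : ℝ → E} {K ε a b : ℝ} (hK : 0 ≤ K) (hε : 0 ≤ ε)
    (hab : a ≤ b) (hf : ∀ x ∈ Set.Icc a b, HasDerivAt f (f' x) x)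
    (hf' : ∀ x ∈ Set.Icc a b, ‖f' x‖ ≤ K * ‖f x‖ + ε) :
    ‖f b‖ ≤ (‖f a‖ + ε * (b - a)) * exp (K * (b - a)) :=
  (norm_le_gronwallBound_of_norm_deriv_right_le
    (fun x hx => (hf x hx).continuousAt.continuousWithinAt)
    (fun x hx => (hf x (Set.Ico_subset_Icc_self hx)).hasDerivWithinAt) le_rfl
    (fun x hx => hf' x (Set.Ico_subset_Icc_self hx)) b (Set.right_mem_Icc.2 hab)).trans
    (gronwallBound_le_exp hK hε)

lemma norm_le_exp_of_norm_deriv_le {f f' : ℝ → E} {K ε a b : ℝ} (hK : 0 ≤ K) (hε : 0 ≤ ε)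
    (hf : ∀ x ∈ Set.uIcc a b, HasDerivAt f (f' x) x)
    (hf' : ∀ x ∈ Set.uIcc a b, ‖f' x‖ ≤ K * ‖f x‖ + ε) :
    ‖f b‖ ≤ (‖f a‖ + ε * |b - a|) * exp (K * |b - a|) := by
  rcases le_total a b with hab | hab
  · rw [Set.uIcc_of_le hab] at hf hf'
    rw [abs_of_nonneg (sub_nonneg.2 hab)]
    exact norm_le_exp_of_norm_deriv_le_of_le hK hε hab hf hf'
  · rw [Set.uIcc_of_ge hab] at hf hf'
    have hmem : ∀ {x}, x ∈ Set.Icc (-a) (-b) → -x ∈ Set.Icc b a := fun hx =>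
      ⟨by linarith [hx.2], by linarith [hx.1]⟩
    have h := norm_le_exp_of_norm_deriv_le_of_le (f := fun x => f (-x)) (f' := fun x => -f' (-x))
      hK hε (neg_le_neg hab)
      (fun x hx => by
        simpa [Function.comp_def] using (hf (-x) (hmem hx)).scomp x (hasDerivAt_neg x))
      (fun x hx => by simpa using hf' (-x) (hmem hx))
    rw [abs_of_nonpos (sub_nonpos.2 hab)]
    simpa [add_comm (-b), ← sub_eq_add_neg] using h

lemma inv_mem_uIcc_of_mem_uIcc_inv {a b s : ℝ} (ha : 0 < a) (hb : 0 < b)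
    (hs : s ∈ Set.uIcc a⁻¹ b⁻¹) : 0 < s ∧ s⁻¹ ∈ Set.uIcc a b := by
  rw [Set.mem_uIcc] at hs ⊢
  have hs0 : 0 < s := by
    rcases hs with h | h
    exacts [(inv_pos.2 ha).trans_le h.1, (inv_pos.2 hb).trans_le h.1]
  refine ⟨hs0, hs.symm.imp ?_ ?_⟩
  · exact fun h => ⟨(le_inv_comm₀ ha hs0).2 h.2, (inv_le_comm₀ hs0 hb).2 h.1⟩
  · exact fun h => ⟨(le_inv_comm₀ hb hs0).2 h.2, (inv_le_comm₀ hs0 ha).2 h.1⟩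

-- Grönwall's inequality in the variable `s = 1 / t`, for which `ds = -dt / t²`.
lemma norm_le_exp_of_norm_deriv_le_inv_sq {z z' : ℝ → E} {B K a b : ℝ} (hB : 0 ≤ B) (hK : 0 ≤ K)
    (ha : 0 < a) (hb : 0 < b) (hz : ∀ t ∈ Set.uIcc a b, HasDerivAt z (z' t) t)
    (hz' : ∀ t ∈ Set.uIcc a b, ‖z' t‖ ≤ B / t ^ 2 * ‖z t‖ + K / t ^ 3) :
    ‖z b‖ ≤ (‖z a‖ + K * max a⁻¹ b⁻¹ ^ 2) * exp (B * max a⁻¹ b⁻¹) := by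
  set S := max a⁻¹ b⁻¹
  have hS0 : 0 < S := (inv_pos.2 ha).trans_le (le_max_left _ _)
  have hlen : |b⁻¹ - a⁻¹| ≤ S := by
    rw [abs_le, neg_le_sub_iff_le_add]
    constructor <;> linarith [le_max_left a⁻¹ b⁻¹, le_max_right a⁻¹ b⁻¹, inv_pos.2 hb, inv_pos.2 ha]
  have hgron := norm_le_exp_of_norm_deriv_le (f := fun s => z s⁻¹)
    (f' := fun s => (-(s ^ 2)⁻¹) • z' s⁻¹) (K := B) (ε := K * S) (a := a⁻¹) (b := b⁻¹)
    hB (mul_nonneg hK hS0.le)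
    (fun s hs => by
      obtain ⟨hs0, hst⟩ := inv_mem_uIcc_of_mem_uIcc_inv ha hb hs
      exact (hz _ hst).scomp s (hasDerivAt_inv hs0.ne'))
    (fun s hs => by
      obtain ⟨hs0, hst⟩ := inv_mem_uIcc_of_mem_uIcc_inv ha hb hs
      have hsS : s ≤ S := hs.2
      calc ‖(-(s ^ 2)⁻¹) • z' s⁻¹‖ = (s ^ 2)⁻¹ * ‖z' s⁻¹‖ := by
            rw [norm_smul, norm_neg, norm_inv, norm_pow, norm_of_nonneg hs0.le]
        _ ≤ (s ^ 2)⁻¹ * (B / s⁻¹ ^ 2 * ‖z s⁻¹‖ + K / s⁻¹ ^ 3) := by gcongr; exact hz' _ hst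
        _ = B * ‖z s⁻¹‖ + K * s := by field_simp
        _ ≤ B * ‖z s⁻¹‖ + K * S := by gcongr)
  simp only [inv_inv] at hgron
  calc ‖z b‖ ≤ (‖z a‖ + K * S * |b⁻¹ - a⁻¹|) * exp (B * |b⁻¹ - a⁻¹|) := hgron
    _ ≤ (‖z a‖ + K * S * S) * exp (B * S) := by gcongr
    _ = (‖z a‖ + K * S ^ 2) * exp (B * S) := by rw [mul_assoc, ← sq]

/-- The phase-space vector `e' + i N e` seen in the frame rotating with frequency `N`, so that it is
constant for solutions of `e'' + N² e = 0`. -/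
noncomputable def rotatingFrame (N : ℝ) (e e' : ℝ → ℝ) (t : ℝ) : ℂ :=
  Complex.exp (-(N * t * Complex.I)) * (e' t + N * e t * Complex.I)

lemma norm_rotatingFrame (N : ℝ) (e e' : ℝ → ℝ) (t : ℝ) :
    ‖rotatingFrame N e e' t‖ = ‖(e' t + N * e t * Complex.I : ℂ)‖ := by
  rw [rotatingFrame, norm_mul, ← neg_mul]
  exact_mod_cast (mul_left_eq_self₀ (M₀ := ℝ)).2 (Or.inl (Complex.norm_exp_ofReal_mul_I (-(N * t))))

lemma mul_abs_le_norm_rotatingFrame {N : ℝ} (hN : 0 ≤ N) (e e' : ℝ → ℝ) (t : ℝ) :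
    N * |e t| ≤ ‖rotatingFrame N e e' t‖ := by
  rw [norm_rotatingFrame]
  simpa [abs_mul, abs_of_nonneg hN] using Complex.abs_im_le_norm (e' t + N * e t * Complex.I)

lemma norm_rotatingFrame_le {N : ℝ} (hN : 0 ≤ N) (e e' : ℝ → ℝ) (t : ℝ) :
    ‖rotatingFrame N e e' t‖ ≤ N * |e t| + |e' t| := by
  rw [norm_rotatingFrame, add_comm (N * _)]
  refine (norm_add_le _ _).trans_eq ?_
  simp [abs_of_nonneg hN]

lemma hasDerivAt_rotatingFrame {N t : ℝ} {e e' : ℝ → ℝ} {e'' : ℝ} (he : HasDerivAt e (e' t) t)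
    (he' : HasDerivAt e' e'' t) :
    HasDerivAt (rotatingFrame N e e')
      (Complex.exp (-(N * t * Complex.I)) * (N ^ 2 * e t + e'' : ℝ)) t := by
  have hexp : HasDerivAt (fun t : ℝ => Complex.exp (-(N * t * Complex.I)))
      (Complex.exp (-(N * t * Complex.I)) * -(N * Complex.I)) t := by
    simpa using ((((hasDerivAt_id t).ofReal_comp.const_mul (N : ℂ)).mul_const Complex.I).neg).cexp
  refine (hexp.mul (he'.ofReal_comp.add
    ((he.ofReal_comp.const_mul (N : ℂ)).mul_const Complex.I))).congr_deriv ?_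
  simp only [Pi.add_apply]
  push_cast
  linear_combination -Complex.exp (-(N * t * Complex.I)) * N ^ 2 * e t * Complex.I_sq

lemma mul_abs_le_of_perturbed_oscillator {N B K φ₀ φ : ℝ} (hN : 0 < N) (hB : 0 ≤ B) (hK : 0 ≤ K)
    (hφ₀ : 0 < φ₀) (hφ : 0 < φ) {e e' q g : ℝ → ℝ}
    (he : ∀ t ∈ Set.uIcc φ₀ φ, HasDerivAt e (e' t) t)
    (he' : ∀ t ∈ Set.uIcc φ₀ φ, HasDerivAt e' (-(N ^ 2 + q t) * e t + g t) t)
    (hq : ∀ t ∈ Set.uIcc φ₀ φ, |q t| ≤ B / t ^ 2) (hg : ∀ t ∈ Set.uIcc φ₀ φ, |g t| ≤ K / t ^ 3) :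
    N * |e φ| ≤ (N * |e φ₀| + |e' φ₀| + K * max φ₀⁻¹ φ⁻¹ ^ 2) *
      exp (B / N * max φ₀⁻¹ φ⁻¹) := by
  have hbound : ∀ t ∈ Set.uIcc φ₀ φ,
      ‖Complex.exp (-(N * t * Complex.I)) * (-q t * e t + g t : ℝ)‖ ≤
        B / N / t ^ 2 * ‖rotatingFrame N e e' t‖ + K / t ^ 3 := by
    intro t ht
    calc ‖Complex.exp (-(N * t * Complex.I)) * (-q t * e t + g t : ℝ)‖
        = |-q t * e t + g t| := by
          rw [norm_mul, ← neg_mul]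
          exact_mod_cast (mul_left_eq_self₀ (M₀ := ℝ)).2
            (Or.inl (Complex.norm_exp_ofReal_mul_I (-(N * t))))
      _ ≤ |q t| * |e t| + |g t| := (abs_add_le _ _).trans_eq (by rw [abs_mul, abs_neg])
      _ ≤ B / t ^ 2 * |e t| + K / t ^ 3 := by gcongr <;> [exact hq t ht; exact hg t ht]
      _ = B / N / t ^ 2 * (N * |e t|) + K / t ^ 3 := by field_simp
      _ ≤ _ := by gcongr; exact mul_abs_le_norm_rotatingFrame hN.le _ _ _
  calc N * |e φ| ≤ ‖rotatingFrame N e e' φ‖ := mul_abs_le_norm_rotatingFrame hN.le _ _ _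
    _ ≤ _ := norm_le_exp_of_norm_deriv_le_inv_sq (div_nonneg hB hN.le) hK hφ₀ hφ
      (fun t ht => (hasDerivAt_rotatingFrame (he t ht) (he' t ht)).congr_deriv (by congr 2; ring))
      hbound
    _ ≤ _ := by gcongr; exact norm_rotatingFrame_le hN.le _ _ _

end Perturbation

section WKB

variable {γ η φ : ℝ}

/-- The two-term WKB approximation with frequency `N` and phase `δ` to a solution of
`u'' + (N² + liouvillePotential γ η) u = 0`. -/
noncomputable def wkbApprox (γ η N δ φ : ℝ) : ℝ :=
  cos (N * φ - δ) + N⁻¹ * F2fn γ η φ * sin (N * φ - δ)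

/-- The derivative of `wkbApprox`, in closed form. -/
noncomputable def wkbApproxDeriv (γ η N δ φ : ℝ) : ℝ :=
  -N * sin (N * φ - δ) + F2fn γ η φ * cos (N * φ - δ) -
    N⁻¹ * liouvillePotential γ η φ / 2 * sin (N * φ - δ)

lemma hasDerivAt_sin_phase (N δ φ : ℝ) :
    HasDerivAt (fun φ => sin (N * φ - δ)) (N * cos (N * φ - δ)) φ := by
  simpa [mul_comm] using (((hasDerivAt_id φ).const_mul N).sub_const δ).sin

lemma hasDerivAt_cos_phase (N δ φ : ℝ) :
    HasDerivAt (fun φ => cos (N * φ - δ)) (-(N * sin (N * φ - δ))) φ := by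
  simpa [mul_comm] using (((hasDerivAt_id φ).const_mul N).sub_const δ).cos

lemma hasDerivAt_wkbApprox {N : ℝ} (hN : N ≠ 0) (δ : ℝ) (hφ : φ ∈ Set.Ioo 0 π) :
    HasDerivAt (wkbApprox γ η N δ) (wkbApproxDeriv γ η N δ φ) φ := by
  refine ((hasDerivAt_cos_phase N δ φ).add (((hasDerivAt_F2fn γ η hφ).const_mul N⁻¹).mul
    (hasDerivAt_sin_phase N δ φ))).congr_deriv ?_
  rw [wkbApproxDeriv]
  field_simp
  ring

lemma hasDerivAt_wkbApproxDeriv {N : ℝ} (hN : N ≠ 0) (δ : ℝ) (hφ : φ ∈ Set.Ioo 0 π) :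
    HasDerivAt (wkbApproxDeriv γ η N δ)
      (-(N ^ 2 + liouvillePotential γ η φ) * wkbApprox γ η N δ φ +
        N⁻¹ * (liouvillePotential γ η φ * F2fn γ η φ - liouvillePotentialDeriv γ η φ / 2) *
          sin (N * φ - δ)) φ := by
  refine ((((hasDerivAt_sin_phase N δ φ).const_mul (-N)).add
    ((hasDerivAt_F2fn γ η hφ).mul (hasDerivAt_cos_phase N δ φ))).sub
    ((((hasDerivAt_liouvillePotential γ η hφ).const_mul N⁻¹).div_const 2).mul
      (hasDerivAt_sin_phase N δ φ))).congr_deriv ?_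
  rw [wkbApprox]
  field_simp
  ring

lemma abs_wkb_residual_le {B N δ F q r t : ℝ} (hN : 0 < N) (ht : 0 < t) (hB : 0 ≤ B)
    (hF : |F| ≤ B / t) (hq : |q| ≤ B / t ^ 2) (hr : |r| ≤ B / t ^ 3) :
    |N⁻¹ * (q * F - r / 2) * sin (N * t - δ)| ≤ (B ^ 2 + B) / N / t ^ 3 := by
  have hqF : |q * F - r / 2| ≤ B / t ^ 2 * (B / t) + B / t ^ 3 :=
    calc |q * F - r / 2| ≤ |q| * |F| + |r| / 2 := by
          simpa only [abs_mul, abs_div, abs_two] using abs_sub (q * F) (r / 2)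
      _ ≤ |q| * |F| + |r| := by linarith [abs_nonneg r]
      _ ≤ B / t ^ 2 * (B / t) + B / t ^ 3 := by gcongr
  calc |N⁻¹ * (q * F - r / 2) * sin (N * t - δ)|
      = N⁻¹ * |q * F - r / 2| * |sin (N * t - δ)| := by
        rw [abs_mul, abs_mul, abs_of_pos (inv_pos.2 hN)]
    _ ≤ N⁻¹ * (B / t ^ 2 * (B / t) + B / t ^ 3) * 1 := by
        gcongr
        exact abs_sin_le_one _
    _ = (B ^ 2 + B) / N / t ^ 3 := by field_simp

lemma mul_abs_sub_wkbApprox_le {B N δ φ₀ b : ℝ} {u u' : ℝ → ℝ} (hN : 0 < N) (hB : 0 ≤ B)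
    (hb : b < π)
    (hbounds : ∀ t ∈ Set.Ioc 0 b, |F2fn γ η t| ≤ B / t ∧ |liouvillePotential γ η t| ≤ B / t ^ 2 ∧
      |liouvillePotentialDeriv γ η t| ≤ B / t ^ 3)
    (hu : ∀ t ∈ Set.Ioo 0 π, HasDerivAt u (u' t) t)
    (hu' : ∀ t ∈ Set.Ioo 0 π, HasDerivAt u' (-(N ^ 2 + liouvillePotential γ η t) * u t) t)
    (hφ₀ : φ₀ ∈ Set.Ioc 0 b) (hφ : φ ∈ Set.Ioc 0 b) :
    N * |u φ - wkbApprox γ η N δ φ| ≤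
      (N * |u φ₀ - wkbApprox γ η N δ φ₀| + |u' φ₀ - wkbApproxDeriv γ η N δ φ₀| +
        (B ^ 2 + B) / N * max φ₀⁻¹ φ⁻¹ ^ 2) * exp (B / N * max φ₀⁻¹ φ⁻¹) := by
  have hsub : Set.uIcc φ₀ φ ⊆ Set.Ioc 0 b := Set.ordConnected_Ioc.uIcc_subset hφ₀ hφ
  have hpi : ∀ t ∈ Set.uIcc φ₀ φ, t ∈ Set.Ioo 0 π := fun t ht =>
    ⟨(hsub ht).1, (hsub ht).2.trans_lt hb⟩
  refine mul_abs_le_of_perturbed_oscillator (e := u - wkbApprox γ η N δ)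
    (e' := u' - wkbApproxDeriv γ η N δ)
    (g := fun t => -(N⁻¹ * (liouvillePotential γ η t * F2fn γ η t -
      liouvillePotentialDeriv γ η t / 2) * sin (N * t - δ)))
    hN hB (by positivity) hφ₀.1 hφ.1
    (fun t ht => (hu t (hpi t ht)).sub (hasDerivAt_wkbApprox hN.ne' δ (hpi t ht)))
    (fun t ht => ?_) (fun t ht => (hbounds t (hsub ht)).2.1) (fun t ht => ?_)
  · refine ((hu' t (hpi t ht)).sub
      (hasDerivAt_wkbApproxDeriv hN.ne' δ (hpi t ht))).congr_deriv ?_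
    rw [Pi.sub_apply]
    ring
  · obtain ⟨hF, hq, hr⟩ := hbounds t (hsub ht)
    rw [abs_neg]
    exact abs_wkb_residual_le hN (hsub ht).1 hB hF hq hr

lemma exists_abs_sub_wkbApprox_le (γ η : ℝ) {b φ₀ c D : ℝ} (hb : b < π) (hc : 0 < c) (hD : 0 ≤ D)
    (hφ₀ : φ₀ ∈ Set.Ioc 0 b) :
    ∃ C, 0 < C ∧ ∀ (N δ : ℝ) (u u' : ℝ → ℝ), 0 < N →
      (∀ t ∈ Set.Ioo 0 π, HasDerivAt u (u' t) t) →
      (∀ t ∈ Set.Ioo 0 π, HasDerivAt u' (-(N ^ 2 + liouvillePotential γ η t) * u t) t) →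
      |u φ₀ - wkbApprox γ η N δ φ₀| ≤ D / N ^ 2 →
      |u' φ₀ - wkbApproxDeriv γ η N δ φ₀| ≤ D / N →
      ∀ φ ∈ Set.Ioc 0 b, c ≤ N * φ → |u φ - wkbApprox γ η N δ φ| ≤ C / (N * φ) ^ 2 := by
  have hφ₀0 : 0 < φ₀ := hφ₀.1
  obtain ⟨B, hB, hbounds⟩ := exists_liouville_bounds γ η (hφ₀0.trans_le hφ₀.2) hb
  set κ := b / φ₀ with hκ
  have hκ1 : 1 ≤ κ := (one_le_div hφ₀0).2 hφ₀.2
  refine ⟨(2 * D * b ^ 2 + (B ^ 2 + B) * κ ^ 2) * exp (B * κ / c) + 1, by positivity, ?_⟩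
  intro N δ u u' hN hu hu' h₀ h₀' φ hφ hcφ
  have hφ0 : 0 < φ := hφ.1
  have hmax : max φ₀⁻¹ φ⁻¹ ≤ κ * φ⁻¹ := by
    refine max_le ?_ (le_mul_of_one_le_left (inv_pos.2 hφ0).le hκ1)
    rw [hκ, div_eq_mul_inv, mul_assoc, mul_left_comm, ← div_eq_mul_inv]
    exact le_mul_of_one_le_right (inv_pos.2 hφ₀0).le ((one_le_div hφ0).2 hφ.2)
  have hexp : B / N * (κ * φ⁻¹) ≤ B * κ / c :=
    calc B / N * (κ * φ⁻¹) = B * κ / (N * φ) := by field_simp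
      _ ≤ B * κ / c := by gcongr
  rw [le_div_iff₀ (by positivity)]
  calc |u φ - wkbApprox γ η N δ φ| * (N * φ) ^ 2
      = N * φ ^ 2 * (N * |u φ - wkbApprox γ η N δ φ|) := by ring
    _ ≤ N * φ ^ 2 * ((N * (D / N ^ 2) + D / N + (B ^ 2 + B) / N * (κ * φ⁻¹) ^ 2) *
        exp (B * κ / c)) := by
      refine mul_le_mul_of_nonneg_left ?_ (by positivity)
      refine (mul_abs_sub_wkbApprox_le (δ := δ) hN hB hb hbounds hu hu' hφ₀ hφ).trans ?_
      refine mul_le_mul (by gcongr) (exp_le_exp.2 ?_) (exp_pos _).le (by positivity)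
      exact (mul_le_mul_of_nonneg_left hmax (by positivity)).trans hexp
    _ = (2 * D * φ ^ 2 + (B ^ 2 + B) * κ ^ 2) * exp (B * κ / c) := by field_simp; ring
    _ ≤ (2 * D * b ^ 2 + (B ^ 2 + B) * κ ^ 2) * exp (B * κ / c) := by gcongr; exact hφ.2
    _ ≤ _ := by linarith

end WKB

section GammaRatio

open Filter Topology Asymptotics

lemma tendsto_natCast_add_const_div (c : ℝ) :
    Tendsto (fun n : ℕ => ((n : ℝ) + c) / n) atTop (𝓝 1) := by
  simpa using (tendsto_natCast_div_add_atTop c).inv₀ one_ne_zero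

lemma Gamma_add_natCast_add_one {s : ℝ} (hs : 0 < s) (n : ℕ) :
    Gamma (s + n + 1) = Gamma s * ∏ j ∈ Finset.range (n + 1), (s + j) := by
  induction n with
  | zero => simp [Gamma_add_one hs.ne', mul_comm]
  | succ k ih =>
    rw [Finset.prod_range_succ, ← mul_assoc, ← ih, mul_comm,
      show s + ((k + 1 : ℕ) : ℝ) = s + k + 1 by push_cast; ring, Gamma_add_one (by positivity)]

lemma tendsto_Gamma_div_rpow_mul_factorial {s : ℝ} (hs : -1 < s) :
    Tendsto (fun n : ℕ => Gamma (n + s + 1) / ((n : ℝ) ^ s * n.factorial)) atTop (𝓝 1) := by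
  have hs1 : 0 < s + 1 := by linarith
  have hseq := ((tendsto_const_nhds (x := Gamma (s + 1))).div (GammaSeq_tendsto_Gamma (s + 1))
    (Gamma_pos_of_pos hs1).ne').div (tendsto_natCast_add_const_div (s + 1)) one_ne_zero
  rw [div_self (Gamma_pos_of_pos hs1).ne', div_one] at hseq
  refine hseq.congr' ?_
  filter_upwards [eventually_gt_atTop 0] with n hn
  have hn : (0 : ℝ) < n := by exact_mod_cast hn
  have hΓ := Gamma_add_natCast_add_one hs1 n
  rw [add_right_comm s, add_comm s, Gamma_natCast_succ_add hs] at hΓ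
  have hns : (n : ℝ) + s + 1 ≠ 0 := by linarith
  simp only [Pi.div_apply, GammaSeq]
  rw [div_div_eq_mul_div, div_div_eq_mul_div, ← hΓ, rpow_add_one hn.ne', ← add_assoc]
  field_simp

lemma tendsto_Gamma_div_Gamma {a b : ℝ} (ha : -1 < a) (hb : -1 < b) :
    Tendsto (fun n : ℕ => Gamma (n + a + 1) / Gamma (n + b + 1) * (n : ℝ) ^ (b - a))
      atTop (𝓝 1) := by
  have h := (tendsto_Gamma_div_rpow_mul_factorial ha).div
    (tendsto_Gamma_div_rpow_mul_factorial hb) one_ne_zero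
  rw [div_one] at h
  refine h.congr' ?_
  filter_upwards [eventually_gt_atTop 0] with n hn
  have hn : (0 : ℝ) < n := by exact_mod_cast hn
  have hfac : (n.factorial : ℝ) ≠ 0 := by positivity
  have hΓ := Gamma_natCast_add_ne_zero hb n
  rw [Pi.div_apply, rpow_sub hn]
  field_simp

end GammaRatio

section Wallis

open Filter Topology Asymptotics

/-- The Wallis integral `∫₀^π sin^n`. -/
noncomputable def wallisIntegral (n : ℕ) : ℝ := ∫ x in (0 : ℝ)..π, sin x ^ n

lemma wallisIntegral_pos (n : ℕ) : 0 < wallisIntegral n := integral_sin_pow_pos n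

lemma wallisIntegral_add_two (n : ℕ) :
    wallisIntegral (n + 2) = ((n : ℝ) + 1) / (n + 2) * wallisIntegral n := by
  simp [wallisIntegral, integral_sin_pow]

lemma wallisIntegral_mul_succ (n : ℕ) :
    wallisIntegral n * wallisIntegral (n + 1) = 2 * π / (n + 1) := by
  induction n with
  | zero => norm_num [wallisIntegral, mul_comm]
  | succ k ih =>
    rw [wallisIntegral_add_two, mul_left_comm, mul_comm (wallisIntegral (k + 1)), ih]
    push_cast
    field_simp
    ring

lemma tendsto_natCast_mul_wallisIntegral_sq :
    Tendsto (fun n : ℕ => (n : ℝ) * wallisIntegral n ^ 2) atTop (𝓝 (2 * π)) := by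
  have hlow : Tendsto (fun n : ℕ => (n : ℝ) / (n + 1) * (2 * π)) atTop (𝓝 (2 * π)) := by
    simpa using (tendsto_natCast_div_add_atTop (1 : ℝ)).mul_const (2 * π)
  refine tendsto_of_tendsto_of_tendsto_of_le_of_le' hlow tendsto_const_nhds
    (Eventually.of_forall fun n => ?_) ((eventually_ge_atTop 1).mono fun n hn => ?_)
  · calc (n : ℝ) / (n + 1) * (2 * π) = n * (wallisIntegral n * wallisIntegral (n + 1)) := by
          rw [wallisIntegral_mul_succ]; ring
      _ ≤ n * (wallisIntegral n * wallisIntegral n) := by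
          gcongr
          exacts [(wallisIntegral_pos n).le, integral_sin_pow_succ_le n]
      _ = n * wallisIntegral n ^ 2 := by ring
  · obtain ⟨k, rfl⟩ := Nat.exists_eq_add_of_le' hn
    calc ((k + 1 : ℕ) : ℝ) * wallisIntegral (k + 1) ^ 2
        = (k + 1) * (wallisIntegral (k + 1) * wallisIntegral (k + 1)) := by push_cast; ring
      _ ≤ (k + 1) * (wallisIntegral k * wallisIntegral (k + 1)) := by
          gcongr
          exacts [(wallisIntegral_pos _).le, integral_sin_pow_succ_le k]
      _ = 2 * π := by rw [wallisIntegral_mul_succ]; field_simp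

lemma tendsto_sqrt_mul_wallisIntegral :
    Tendsto (fun n : ℕ => √n * wallisIntegral n) atTop (𝓝 √(2 * π)) := by
  refine ((continuous_sqrt.tendsto _).comp tendsto_natCast_mul_wallisIntegral_sq).congr fun n => ?_
  rw [Function.comp_apply, sqrt_mul (Nat.cast_nonneg n), sqrt_sq (wallisIntegral_pos n).le]

end Wallis

section SequenceAsymptotics

open Filter Topology Asymptotics

lemma inv_pow_three_le_inv_sq_sub {x : ℝ} (hx : 3 ≤ x) :
    (x ^ 3)⁻¹ ≤ ((x - 1) ^ 2)⁻¹ - ((x + 1) ^ 2)⁻¹ := by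
  have h1 : 0 < x - 1 := by linarith
  have h : ((x - 1) ^ 2)⁻¹ - ((x + 1) ^ 2)⁻¹ = 4 * x / ((x - 1) ^ 2 * (x + 1) ^ 2) := by
    field_simp
    ring
  rw [h, ← one_div, div_le_div_iff₀ (by positivity) (by positivity)]
  nlinarith [sq_nonneg (x ^ 2), sq_nonneg x]

-- `|a n| - C / (n - 1)²` increases along `n, n + 2, n + 4, …` and tends to `0`.
lemma abs_le_of_abs_sub_le_inv_pow_three {a : ℕ → ℝ} {C : ℝ} {n : ℕ} (ha : Tendsto a atTop (𝓝 0))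
    (hC : 0 ≤ C) (hn : 3 ≤ n) (h : ∀ m, n ≤ m → |a (m + 2) - a m| ≤ C * ((m : ℝ) ^ 3)⁻¹) :
    |a n| ≤ C * (((n : ℝ) - 1) ^ 2)⁻¹ := by
  set f : ℕ → ℝ := fun m => |a m| - C * (((m : ℝ) - 1) ^ 2)⁻¹ with hf
  have hmono : Monotone fun k => f (n + 2 * k) := by
    refine monotone_nat_of_le_succ fun k => ?_
    have hm : n ≤ n + 2 * k := Nat.le_add_right _ _
    rw [show n + 2 * (k + 1) = n + 2 * k + 2 by ring]
    generalize n + 2 * k = m at hm ⊢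
    have hm3 : (3 : ℝ) ≤ m := by exact_mod_cast hn.trans hm
    have hinv := mul_le_mul_of_nonneg_left (inv_pow_three_le_inv_sq_sub hm3) hC
    have habs := (abs_sub_abs_le_abs_sub (a m) (a (m + 2))).trans_eq (abs_sub_comm _ _)
    have hcast : ((m + 2 : ℕ) : ℝ) - 1 = m + 1 := by push_cast; ring
    simp only [hf, hcast]
    linarith [h m hm]
  have hlim : Tendsto f atTop (𝓝 0) := by
    have hinv : Tendsto (fun m : ℕ => (((m : ℝ) - 1) ^ 2)⁻¹) atTop (𝓝 0) :=
      ((tendsto_pow_atTop two_ne_zero).comp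
        (tendsto_atTop_add_const_right _ (-1) tendsto_natCast_atTop_atTop)).inv_tendsto_atTop
    simpa using ha.abs.sub (hinv.const_mul C)
  have hle : f n ≤ 0 := hmono.ge_of_tendsto (hlim.comp
    (tendsto_atTop_mono (fun k => by simp only [id]; omega) tendsto_id)) 0
  exact sub_nonpos.1 hle

lemma isBigO_inv_sq_of_add_two_sub {a : ℕ → ℝ} (ha : Tendsto a atTop (𝓝 0))
    (h : (fun n => a (n + 2) - a n) =O[atTop] fun n : ℕ => ((n : ℝ) ^ 3)⁻¹) :
    a =O[atTop] fun n : ℕ => ((n : ℝ) ^ 2)⁻¹ := by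
  obtain ⟨C, hC, hbound⟩ := h.exists_pos
  obtain ⟨n₀, hn₀⟩ := eventually_atTop.1 hbound.bound
  refine IsBigO.of_bound (4 * C) ?_
  filter_upwards [eventually_ge_atTop (max n₀ 3)] with n hn
  obtain ⟨hn₀n, hn3⟩ := max_le_iff.1 hn
  have hn3' : (3 : ℝ) ≤ n := by exact_mod_cast hn3
  have habs := abs_le_of_abs_sub_le_inv_pow_three ha hC.le hn3 fun m hm => by
    simpa using hn₀ m (hn₀n.trans hm)
  rw [norm_eq_abs, norm_of_nonneg (by positivity)]
  calc |a n| ≤ C * (((n : ℝ) - 1) ^ 2)⁻¹ := habs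
    _ ≤ C * ((n / 2 : ℝ) ^ 2)⁻¹ := by gcongr; linarith
    _ = 4 * C * ((n : ℝ) ^ 2)⁻¹ := by field_simp; ring

lemma log_one_add_sub_isBigO :
    (fun x : ℝ => log (1 + x) - (x - x ^ 2 / 2)) =O[𝓝 0] fun x => x ^ 3 := by
  refine IsBigO.of_bound 2 ?_
  filter_upwards [Metric.ball_mem_nhds (0 : ℝ) (by norm_num : (0 : ℝ) < 1 / 2)] with x hx
  have hx : |x| < 1 / 2 := by simpa using hx
  have h := abs_log_sub_add_sum_range_le (x := -x) (by rw [abs_neg]; linarith) 2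
  norm_num [Finset.sum_range_succ] at h
  rw [norm_eq_abs, norm_eq_abs, abs_pow]
  calc |log (1 + x) - (x - x ^ 2 / 2)| = |-x + x ^ 2 / 2 + log (1 + x)| := by ring_nf
    _ ≤ |x| ^ 3 / (1 - |x|) := h
    _ ≤ |x| ^ 3 / (1 / 2) := by gcongr; linarith
    _ = 2 * |x| ^ 3 := by ring

lemma log_natCast_add_isBigO (s : ℝ) :
    (fun n : ℕ => log (n + s) - log n - (s * (n : ℝ)⁻¹ - s ^ 2 / 2 * (n : ℝ)⁻¹ ^ 2)) =O[atTop]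
      fun n : ℕ => ((n : ℝ) ^ 3)⁻¹ := by
  have hs : Tendsto (fun n : ℕ => s * (n : ℝ)⁻¹) atTop (𝓝 0) := by
    simpa using (tendsto_inv_atTop_nhds_zero_nat (𝕜 := ℝ)).const_mul s
  have h := log_one_add_sub_isBigO.comp_tendsto hs
  refine (h.congr' ?_ (Eventually.of_forall fun n => ?_)).trans
    ((isBigO_refl _ atTop).const_mul_left (s ^ 3))
  · filter_upwards [eventually_gt_atTop 0, hs.eventually_const_lt neg_one_lt_zero] with n hn hsn
    have hn : (0 : ℝ) < n := by exact_mod_cast hn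
    have hadd : (n : ℝ) + s = n * (1 + s * (n : ℝ)⁻¹) := by field_simp
    rw [Function.comp_apply, hadd, log_mul hn.ne' (by linarith)]
    ring
  · simp only [Function.comp_apply, mul_pow, inv_pow]

lemma inv_natCast_add_isBigO (s : ℝ) :
    (fun n : ℕ => ((n : ℝ) + s)⁻¹ - ((n : ℝ)⁻¹ - s * (n : ℝ)⁻¹ ^ 2)) =O[atTop]
      fun n : ℕ => ((n : ℝ) ^ 3)⁻¹ := by
  refine IsBigO.of_bound (2 * s ^ 2) ?_
  filter_upwards [eventually_gt_atTop 0,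
    tendsto_natCast_atTop_atTop.eventually_ge_atTop (2 * |s|)] with n hn hsn
  have hn : (0 : ℝ) < n := by exact_mod_cast hn
  have hns : (n : ℝ) / 2 ≤ n + s := by linarith [neg_abs_le s]
  have hns0 : 0 < (n : ℝ) + s := by linarith
  have heq : ((n : ℝ) + s)⁻¹ - ((n : ℝ)⁻¹ - s * (n : ℝ)⁻¹ ^ 2) =
      s ^ 2 * (n : ℝ)⁻¹ ^ 2 * (n + s)⁻¹ := by
    field_simp
    ring
  rw [heq, norm_of_nonneg (by positivity), norm_of_nonneg (by positivity)]
  calc s ^ 2 * (n : ℝ)⁻¹ ^ 2 * (n + s)⁻¹ ≤ s ^ 2 * (n : ℝ)⁻¹ ^ 2 * (n / 2 : ℝ)⁻¹ := by gcongr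
    _ = 2 * s ^ 2 * ((n : ℝ) ^ 3)⁻¹ := by field_simp

end SequenceAsymptotics

section MidpointFactor

open Filter Topology Asymptotics

/-- The factor `√π Γ(n+γ+η+1) / Γ(n+γ+1) · N^{1/2-η}`, with `N` the frequency `jacobiFreq γ η n`,
which brings the Liouville-transformed Jacobi polynomial to asymptotically unit amplitude. -/
noncomputable def jacobiAmplitude (γ η : ℝ) (n : ℕ) : ℝ :=
  √π * (Gamma (n + γ + η + 1) / Gamma (n + γ + 1)) * jacobiFreq γ η n ^ (1 / 2 - η)

/-- The product of `jacobiAmplitude` and the Wallis integral by which `P_n(0)` is measured,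
normalised to tend to `1`. -/
noncomputable def midpointFactor (γ η : ℝ) (n : ℕ) : ℝ :=
  jacobiAmplitude γ η n * wallisIntegral n / (√2 * π)

variable {γ η : ℝ}

lemma jacobiFreq_pos (hγη : -1 < γ + η) (n : ℕ) : 0 < jacobiFreq γ η n := by
  rw [jacobiFreq]
  linarith

lemma jacobiAmplitude_pos (hγ : -1 < γ) (hγη : -1 < γ + η) (n : ℕ) :
    0 < jacobiAmplitude γ η n := by
  have hN := jacobiFreq_pos hγη n
  have hnum : 0 < Gamma (n + γ + η + 1) := Gamma_pos_of_pos (by linarith)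
  have hden : 0 < Gamma (n + γ + 1) := Gamma_pos_of_pos (by linarith)
  rw [jacobiAmplitude]
  positivity

lemma midpointFactor_pos (hγ : -1 < γ) (hγη : -1 < γ + η) (n : ℕ) : 0 < midpointFactor γ η n :=
  div_pos (mul_pos (jacobiAmplitude_pos hγ hγη n) (wallisIntegral_pos n)) (by positivity)

lemma log_Gamma_add_two {x : ℝ} (hx : 0 < x) :
    log (Gamma (x + 2)) = log x + log (x + 1) + log (Gamma x) := by
  have hΓ := (Gamma_pos_of_pos hx).ne'
  have hx1 : x + 1 ≠ 0 := by linarith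
  rw [show x + 2 = x + 1 + 1 by ring, Gamma_add_one hx1, Gamma_add_one hx.ne',
    log_mul hx1 (mul_ne_zero hx.ne' hΓ), log_mul hx.ne' hΓ]
  ring

lemma log_jacobiAmplitude (hγ : -1 < γ) (hγη : -1 < γ + η) (n : ℕ) :
    log (jacobiAmplitude γ η n) = log √π + log (Gamma (n + γ + η + 1)) - log (Gamma (n + γ + 1)) +
      (1 / 2 - η) * log (jacobiFreq γ η n) := by
  have hN := jacobiFreq_pos hγη n
  have hnum : 0 < Gamma (n + γ + η + 1) := Gamma_pos_of_pos (by linarith)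
  have hden : 0 < Gamma (n + γ + 1) := Gamma_pos_of_pos (by linarith)
  rw [jacobiAmplitude, log_mul (by positivity) (by positivity),
    log_mul (by positivity) (by positivity), log_div hnum.ne' hden.ne', log_rpow hN]
  ring

lemma log_wallisIntegral_add_two (n : ℕ) :
    log (wallisIntegral (n + 2)) = log (n + 1) - log (n + 2) + log (wallisIntegral n) := by
  rw [wallisIntegral_add_two, log_mul (by positivity) (wallisIntegral_pos n).ne',
    log_div (by positivity) (by positivity)]

lemma log_midpointFactor (hγ : -1 < γ) (hγη : -1 < γ + η) (n : ℕ) :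
    log (midpointFactor γ η n) =
      log (jacobiAmplitude γ η n) + log (wallisIntegral n) - log (√2 * π) := by
  have hA := (jacobiAmplitude_pos hγ hγη n).ne'
  have hW := (wallisIntegral_pos n).ne'
  rw [midpointFactor, log_div (mul_ne_zero hA hW) (by positivity), log_mul hA hW]

lemma log_midpointFactor_add_two (hγ : -1 < γ) (hγη : -1 < γ + η) (n : ℕ) :
    log (midpointFactor γ η (n + 2)) = log (midpointFactor γ η n) +
      (log (n + (γ + η + 1)) + log (n + (γ + η + 2)) - log (n + (γ + 1)) - log (n + (γ + 2)) +
        log (n + 1) - log (n + 2) +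
        (1 / 2 - η) * (log (n + ((γ + η + 1) / 2 + 2)) - log (n + (γ + η + 1) / 2))) := by
  have hnum := log_Gamma_add_two (x := n + γ + η + 1) (by linarith)
  have hden := log_Gamma_add_two (x := n + γ + 1) (by linarith)
  rw [log_midpointFactor hγ hγη, log_midpointFactor hγ hγη, log_jacobiAmplitude hγ hγη,
    log_jacobiAmplitude hγ hγη, log_wallisIntegral_add_two]
  simp only [jacobiFreq]
  push_cast
  ring_nf at hnum hden ⊢
  linarith

lemma tendsto_jacobiFreq_div_natCast (γ η : ℝ) :
    Tendsto (fun n : ℕ => jacobiFreq γ η n / n) atTop (𝓝 1) :=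
  tendsto_natCast_add_const_div _

lemma tendsto_inv_jacobiFreq (γ η : ℝ) :
    Tendsto (fun n : ℕ => (jacobiFreq γ η n)⁻¹) atTop (𝓝 0) :=
  (tendsto_atTop_add_const_right _ _ tendsto_natCast_atTop_atTop).inv_tendsto_atTop

lemma tendsto_midpointFactor (hγ : -1 < γ) (hγη : -1 < γ + η) :
    Tendsto (midpointFactor γ η) atTop (𝓝 1) := by
  have hlim := ((tendsto_Gamma_div_Gamma hγη hγ).mul
    (tendsto_sqrt_mul_wallisIntegral.mul_const (√(2 * π))⁻¹)).mul
    ((tendsto_jacobiFreq_div_natCast γ η).rpow_const (p := 1 / 2 - η) (Or.inl one_ne_zero))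
  rw [mul_inv_cancel₀ (by positivity), one_rpow, mul_one, mul_one] at hlim
  refine hlim.congr' ?_
  filter_upwards [eventually_gt_atTop 0] with n hn
  have hn : (0 : ℝ) < n := by exact_mod_cast hn
  have hpow : (n : ℝ) ^ (1 / 2 - η) = (n : ℝ) ^ (γ - (γ + η)) * √n := by
    rw [sqrt_eq_rpow, ← rpow_add hn]
    ring_nf
  have hroot : π = √π * √π := (mul_self_sqrt pi_pos.le).symm
  have hsqrt : √(2 * π) * √π = √2 * π := by
    rw [sqrt_mul zero_le_two, mul_assoc, ← hroot]
  rw [midpointFactor, jacobiAmplitude, ← hsqrt, div_rpow (jacobiFreq_pos hγη n).le hn.le, hpow,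
    ← add_assoc]
  field_simp

lemma log_midpointFactor_sub_isBigO (hγ : -1 < γ) (hγη : -1 < γ + η) :
    (fun n => log (midpointFactor γ η n) - (γ * η / 2 + (γ + η) / 4) * (jacobiFreq γ η n)⁻¹)
      =O[atTop] fun n : ℕ => ((n : ℝ) ^ 2)⁻¹ := by
  refine isBigO_inv_sq_of_add_two_sub ?_ ?_
  · simpa using ((tendsto_midpointFactor hγ hγη).log one_ne_zero).sub
      ((tendsto_inv_jacobiFreq γ η).const_mul (γ * η / 2 + (γ + η) / 4))
  · set ν := (γ + η + 1) / 2 with hν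
    have hΓ := ((log_natCast_add_isBigO (γ + η + 1)).add (log_natCast_add_isBigO (γ + η + 2))).sub
      ((log_natCast_add_isBigO (γ + 1)).add (log_natCast_add_isBigO (γ + 2)))
    have hW := (log_natCast_add_isBigO 1).sub (log_natCast_add_isBigO 2)
    have hN := ((log_natCast_add_isBigO (ν + 2)).sub (log_natCast_add_isBigO ν)).const_mul_left
      (1 / 2 - η)
    have hinv := ((inv_natCast_add_isBigO (ν + 2)).sub (inv_natCast_add_isBigO ν)).const_mul_left
      (γ * η / 2 + (γ + η) / 4)
    refine (((hΓ.add hW).add hN).sub hinv).congr_left fun n => ?_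
    have hfreq : jacobiFreq γ η n = n + ν := rfl
    have hfreq2 : jacobiFreq γ η (n + 2) = n + (ν + 2) := by
      rw [jacobiFreq]
      push_cast
      ring
    rw [log_midpointFactor_add_two hγ hγη, hfreq, hfreq2, hν]
    ring

lemma inv_jacobiFreq_isBigO (γ η : ℝ) :
    (fun n => (jacobiFreq γ η n)⁻¹) =O[atTop] fun n : ℕ => (n : ℝ)⁻¹ := by
  refine IsBigO.of_bound 2 ?_
  filter_upwards [eventually_gt_atTop 0,
    (tendsto_jacobiFreq_div_natCast γ η).eventually_const_lt one_half_lt_one] with n hn hlt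
  have hn : (0 : ℝ) < n := by exact_mod_cast hn
  rw [lt_div_iff₀ hn] at hlt
  rw [norm_of_nonneg (inv_nonneg.2 (by linarith)), norm_of_nonneg (by positivity)]
  calc (jacobiFreq γ η n)⁻¹ ≤ (1 / 2 * (n : ℝ))⁻¹ := by gcongr
    _ = 2 * (n : ℝ)⁻¹ := by field_simp

lemma midpointFactor_sub_isBigO (hγ : -1 < γ) (hγη : -1 < γ + η) :
    (fun n => midpointFactor γ η n - (1 + (γ * η / 2 + (γ + η) / 4) * (jacobiFreq γ η n)⁻¹))
      =O[atTop] fun n : ℕ => ((n : ℝ) ^ 2)⁻¹ := by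
  set κ := γ * η / 2 + (γ + η) / 4
  have hlog := log_midpointFactor_sub_isBigO hγ hγη
  have hlim : Tendsto (fun n => log (midpointFactor γ η n)) atTop (𝓝 0) := by
    simpa using (tendsto_midpointFactor hγ hγη).log one_ne_zero
  have hlog_inv : (fun n => log (midpointFactor γ η n)) =O[atTop] fun n : ℕ => (n : ℝ)⁻¹ := by
    have hsq : (fun n : ℕ => ((n : ℝ) ^ 2)⁻¹) =O[atTop] fun n : ℕ => (n : ℝ)⁻¹ := by
      refine IsBigO.of_bound 1 ((eventually_gt_atTop 0).mono fun n hn => ?_)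
      have hn : (1 : ℝ) ≤ n := by exact_mod_cast hn
      rw [one_mul, norm_of_nonneg (by positivity), norm_of_nonneg (by positivity)]
      exact inv_anti₀ (by positivity) (le_self_pow₀ hn two_ne_zero)
    exact ((hlog.trans hsq).add ((inv_jacobiFreq_isBigO γ η).const_mul_left κ)).congr_left
      fun n => sub_add_cancel _ _
  have hexp : (fun n => midpointFactor γ η n - 1 - log (midpointFactor γ η n)) =O[atTop]
      fun n => log (midpointFactor γ η n) ^ 2 := by
    refine IsBigO.of_bound 1 ?_
    filter_upwards [hlim.eventually (Metric.closedBall_mem_nhds 0 one_pos)] with n hn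
    have h := abs_exp_sub_one_sub_id_le (mem_closedBall_zero_iff.1 hn)
    rwa [exp_log (midpointFactor_pos hγ hγη n), ← norm_eq_abs, ← norm_of_nonneg (sq_nonneg _),
      ← one_mul ‖_ ^ 2‖] at h
  have hexp2 := hexp.trans (hlog_inv.pow 2)
  simp only [inv_pow] at hexp2
  exact (hexp2.add hlog).congr_left fun n => by ring

end MidpointFactor

section RodriguesKernel

open Filter Topology

lemma iteratedDeriv_cpow_const {a : ℝ} {k : ℕ} (hk : (k : ℝ) - 1 < a) {z : ℂ}
    (hz : z ∈ Complex.slitPlane) :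
    iteratedDeriv k (fun x : ℂ => x ^ (a : ℂ)) z =
      (Gamma (a + 1) / Gamma (a + 1 - k) : ℝ) * z ^ ((a : ℂ) - k) := by
  induction k generalizing z with
  | zero =>
    have hΓ : Gamma (a + 1) ≠ 0 := (Gamma_pos_of_pos (by norm_num at hk; linarith)).ne'
    simp [hΓ]
  | succ k ih =>
    push_cast at hk
    have heq : iteratedDeriv k (fun x : ℂ => x ^ (a : ℂ)) =ᶠ[𝓝 z] fun x =>
        (Gamma (a + 1) / Gamma (a + 1 - k) : ℝ) * x ^ ((a : ℂ) - k) := by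
      filter_upwards [Complex.isOpen_slitPlane.mem_nhds hz] with x hx
      exact ih (by linarith) hx
    have hderiv := ((hasDerivAt_id z).cpow_const (c := (a : ℂ) - k) hz).const_mul
      ((Gamma (a + 1) / Gamma (a + 1 - k) : ℝ) : ℂ)
    have hak : a - k ≠ 0 := by linarith
    have hΓ : Gamma (a + 1 - k) = (a - k) * Gamma (a - k) := by
      rw [← Gamma_add_one hak]
      ring_nf
    have hak' : (a : ℂ) - k ≠ 0 := by exact_mod_cast hak
    rw [iteratedDeriv_succ, heq.deriv_eq]
    refine hderiv.deriv.trans ?_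
    rw [hΓ, Nat.cast_succ, Nat.cast_succ, add_sub_add_right_eq_sub, ← sub_sub]
    push_cast
    simp only [id]
    field_simp

/-- The function `(1 - z)^b (1 + z)^a`; for `a = n + γ` and `b = n + η` its `n`-th derivative at
`0` is, by the Rodrigues formula, a multiple of `P_n^{(γ,η)}(0)`. -/
noncomputable def rodriguesKernel (a b : ℝ) (z : ℂ) : ℂ := (1 - z) ^ (b : ℂ) * (1 + z) ^ (a : ℂ)

lemma iteratedDeriv_rodriguesKernel {γ η : ℝ} (hγ : -1 < γ) (hη : -1 < η) (n : ℕ) :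
    iteratedDeriv n (rodriguesKernel (n + γ) (n + η)) 0 =
      (n.factorial * 2 ^ n * jacobiP γ η n 0 : ℝ) := by
  have hsub : ContDiffAt ℂ n (fun z : ℂ => (1 - z) ^ ((n + η : ℝ) : ℂ)) 0 :=
    ((analyticAt_const.sub analyticAt_id).cpow analyticAt_const (by simp)).contDiffAt
  have hadd : ContDiffAt ℂ n (fun z : ℂ => (1 + z) ^ ((n + γ : ℝ) : ℂ)) 0 :=
    ((analyticAt_const.add analyticAt_id).cpow analyticAt_const (by simp)).contDiffAt
  unfold rodriguesKernel jacobiP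
  rw [iteratedDeriv_fun_mul hsub hadd, Finset.mul_sum, Complex.ofReal_sum]
  refine Finset.sum_congr rfl fun s hs => ?_
  have hs : s ≤ n := Nat.lt_succ_iff.1 (Finset.mem_range.1 hs)
  have hsn : (s : ℝ) ≤ n := by exact_mod_cast hs
  have hcast : ((n - s : ℕ) : ℝ) = n - s := Nat.cast_sub hs
  have h1 : (1 : ℂ) ∈ Complex.slitPlane := Complex.one_mem_slitPlane
  have hη' : (s : ℝ) - 1 < n + η := by linarith
  have hγ' : ((n - s : ℕ) : ℝ) - 1 < n + γ := by rw [hcast]; linarith [s.cast_nonneg (α := ℝ)]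
  simp only [iteratedDeriv_comp_const_sub s (fun z : ℂ => z ^ ((n + η : ℝ) : ℂ)) 1,
    iteratedDeriv_comp_const_add (n - s) (fun z : ℂ => z ^ ((n + γ : ℝ) : ℂ)) 1, sub_zero, add_zero,
    iteratedDeriv_cpow_const hη' h1, iteratedDeriv_cpow_const hγ' h1, Complex.one_cpow, mul_one]
  have hpow : (((0 : ℝ) - 1) / 2) ^ s * ((0 + 1) / 2) ^ (n - s) = (-1) ^ s / 2 ^ n := by
    rw [zero_sub, zero_add, div_pow, div_pow, one_pow, ← Nat.add_sub_of_le hs, pow_add,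
      Nat.add_sub_cancel_left]
    field_simp
  have hsη : Gamma (n + η + 1 - s) = Gamma (n - s + η + 1) := by ring_nf
  have hsγ : Gamma (n + γ + 1 - (n - s : ℕ)) = Gamma (s + γ + 1) := by rw [hcast]; ring_nf
  rw [mul_assoc _ (((0 - 1 : ℝ) / 2) ^ s), hpow, hsη, hsγ, Nat.cast_choose ℂ hs, smul_eq_mul]
  push_cast
  field_simp

lemma re_one_add_nonneg {z : ℂ} (hz : ‖z‖ ≤ 1) : 0 ≤ (1 + z).re := by
  rw [Complex.add_re, Complex.one_re]
  linarith [(abs_le.1 ((Complex.abs_re_le_norm z).trans hz)).1]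

lemma diffContOnCl_rodriguesKernel {a b : ℝ} (ha : 0 < a) (hb : 0 < b) :
    DiffContOnCl ℂ (rodriguesKernel a b) (Metric.ball 0 1) := by
  unfold rodriguesKernel
  simp only [sub_eq_add_neg]
  refine ⟨fun z hz => ?_, ?_⟩
  · have hz : ‖z‖ < 1 := mem_ball_zero_iff.1 hz
    have hsub := Complex.mem_slitPlane_of_norm_lt_one (z := -z) (by rwa [norm_neg])
    have hadd := Complex.mem_slitPlane_of_norm_lt_one hz
    exact ((((differentiableAt_id.neg).const_add 1).cpow_const hsub).mul
      ((differentiableAt_id.const_add 1).cpow_const hadd)).differentiableWithinAt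
  · rw [closure_ball _ one_ne_zero]
    intro z hz
    have hz : ‖z‖ ≤ 1 := mem_closedBall_zero_iff.1 hz
    have hsub := Complex.continuousAt_cpow_const_of_re_pos (z := 1 + -z) (w := (b : ℂ))
      (Or.inl (re_one_add_nonneg (by rwa [norm_neg]))) hb
    have hadd := Complex.continuousAt_cpow_const_of_re_pos (z := 1 + z) (w := (a : ℂ))
      (Or.inl (re_one_add_nonneg hz)) ha
    exact ((hsub.comp (f := fun z : ℂ => 1 + -z) (by fun_prop)).mul
      (hadd.comp (f := fun z : ℂ => 1 + z) (by fun_prop))).continuousWithinAt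

lemma rodriguesKernel_conj (a b : ℝ) {z : ℂ} (hz : ‖z‖ ≤ 1) :
    rodriguesKernel a b ((starRingEnd ℂ) z) = (starRingEnd ℂ) (rodriguesKernel a b z) := by
  have harg : ∀ w : ℂ, ‖w‖ ≤ 1 → (1 + w).arg ≠ π := fun w hw h =>
    (Complex.arg_eq_pi_iff.1 h).1.not_ge (re_one_add_nonneg hw)
  have hsub : (1 - z).arg ≠ π := sub_eq_add_neg (1 : ℂ) z ▸ harg (-z) (by rwa [norm_neg])
  rw [rodriguesKernel, rodriguesKernel, map_mul, ← map_one (starRingEnd ℂ), ← map_sub, ← map_add,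
    Complex.conj_cpow _ _ hsub, Complex.conj_cpow _ _ (harg z hz), Complex.conj_ofReal,
    Complex.conj_ofReal, map_one]

/-- The integrand `e^{-inθ} (1 - e^{iθ})^{n+η} (1 + e^{iθ})^{n+γ}` of the Cauchy integral over the
unit circle for `P_n^{(γ,η)}(0)`. -/
noncomputable def rodriguesIntegrand (γ η : ℝ) (n : ℕ) (θ : ℝ) : ℂ :=
  Complex.exp (-(n * θ * Complex.I)) * rodriguesKernel (n + γ) (n + η) (Complex.exp (θ * Complex.I))

lemma continuous_rodriguesIntegrand {γ η : ℝ} (hγ : -1 < γ) (hη : -1 < η) {n : ℕ} (hn : 1 ≤ n) :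
    Continuous (rodriguesIntegrand γ η n) := by
  have hn : (1 : ℝ) ≤ n := by exact_mod_cast hn
  have hcont := (diffContOnCl_rodriguesKernel (a := n + γ) (b := n + η) (by linarith [hn])
    (by linarith [hn])).continuousOn
  rw [closure_ball _ one_ne_zero] at hcont
  exact Continuous.mul (by fun_prop) (hcont.comp_continuous (by fun_prop) fun θ => by
    simp [Complex.norm_exp_ofReal_mul_I])

lemma integral_rodriguesIntegrand {γ η : ℝ} (hγ : -1 < γ) (hη : -1 < η) {n : ℕ} (hn : 1 ≤ n) :
    ∫ θ in (0 : ℝ)..2 * π, rodriguesIntegrand γ η n θ = (2 * π * 2 ^ n * jacobiP γ η n 0 : ℝ) := by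
  have hn : (1 : ℝ) ≤ n := by exact_mod_cast hn
  have hcauchy := (diffContOnCl_rodriguesKernel (a := n + γ) (b := n + η) (by linarith [hn])
    (by linarith [hn])).circleIntegral_one_div_sub_center_pow_smul one_pos n
  have hintegrand : ∀ θ : ℝ, deriv (circleMap 0 1) θ • (1 / (circleMap 0 1 θ - 0) ^ (n + 1)) •
      rodriguesKernel (n + γ) (n + η) (circleMap 0 1 θ) =
        Complex.I * rodriguesIntegrand γ η n θ := by
    intro θ
    have hexp := Complex.exp_ne_zero (θ * Complex.I)
    simp only [deriv_circleMap, circleMap, rodriguesIntegrand, smul_eq_mul, zero_add,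
      Complex.ofReal_one, one_mul, sub_zero]
    rw [Complex.exp_neg, mul_assoc (n : ℂ), Complex.exp_nat_mul]
    field_simp
    ring
  rw [iteratedDeriv_rodriguesKernel hγ hη, circleIntegral] at hcauchy
  simp only [hintegrand, intervalIntegral.integral_const_mul] at hcauchy
  refine mul_left_cancel₀ Complex.I_ne_zero (hcauchy.trans ?_)
  have hfac : (n.factorial : ℂ) ≠ 0 := by exact_mod_cast n.factorial_ne_zero
  push_cast
  rw [smul_eq_mul]
  field_simp

lemma rodriguesIntegrand_two_pi_sub_re (γ η : ℝ) (n : ℕ) (θ : ℝ) :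
    (rodriguesIntegrand γ η n (2 * π - θ)).re = (rodriguesIntegrand γ η n θ).re := by
  have hexp : Complex.exp ((2 * π - θ : ℝ) * Complex.I) =
      (starRingEnd ℂ) (Complex.exp (θ * Complex.I)) := by
    rw [← Complex.exp_conj]
    push_cast
    rw [sub_mul, Complex.exp_sub, Complex.exp_two_pi_mul_I, one_div, ← Complex.exp_neg]
    simp
  have hpow : ∀ t : ℝ, Complex.exp (-(n * t * Complex.I)) = (Complex.exp (t * Complex.I) ^ n)⁻¹ :=
    fun t => by rw [Complex.exp_neg, mul_assoc, Complex.exp_nat_mul]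
  have hconj : rodriguesIntegrand γ η n (2 * π - θ) =
      (starRingEnd ℂ) (rodriguesIntegrand γ η n θ) := by
    rw [rodriguesIntegrand, rodriguesIntegrand, map_mul, hpow, hpow, hexp,
      rodriguesKernel_conj _ _ (Complex.norm_exp_ofReal_mul_I θ).le, map_inv₀, map_pow]
  rw [hconj, Complex.conj_re]

lemma integral_rodriguesIntegrand_re {γ η : ℝ} (hγ : -1 < γ) (hη : -1 < η) {n : ℕ} (hn : 1 ≤ n) :
    ∫ θ in (0 : ℝ)..π, (rodriguesIntegrand γ η n θ).re = π * 2 ^ n * jacobiP γ η n 0 := by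
  have hcont := continuous_rodriguesIntegrand hγ hη hn
  have hint : ∀ a b : ℝ, IntervalIntegrable (fun θ => (rodriguesIntegrand γ η n θ).re) volume a b :=
    fun a b => (Complex.continuous_re.comp hcont).intervalIntegrable a b
  have hwhole : ∫ θ in (0 : ℝ)..2 * π, (rodriguesIntegrand γ η n θ).re =
      2 * π * 2 ^ n * jacobiP γ η n 0 := by
    rw [← Complex.ofReal_re (2 * π * 2 ^ n * jacobiP γ η n 0),
      ← integral_rodriguesIntegrand hγ hη hn]
    exact Complex.reCLM.intervalIntegral_comp_comm (hcont.intervalIntegrable _ _)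
  have hhalf := intervalIntegral.integral_comp_sub_left (a := 0) (b := π)
    (fun θ => (rodriguesIntegrand γ η n θ).re) (2 * π)
  simp only [rodriguesIntegrand_two_pi_sub_re] at hhalf
  rw [sub_zero, show 2 * π - π = π by ring] at hhalf
  rw [← intervalIntegral.integral_add_adjacent_intervals (hint 0 π) (hint π _), ← hhalf] at hwhole
  linarith

end RodriguesKernel

section LaplaceIntegral

lemma ofReal_mul_exp_cpow {r φ : ℝ} (hr : 0 < r) (hφ : φ ∈ Set.Ioc (-π) π) (a : ℝ) :
    ((r : ℂ) * Complex.exp (φ * Complex.I)) ^ (a : ℂ) =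
      (r ^ a : ℝ) * Complex.exp ((a * φ : ℝ) * Complex.I) := by
  have hne : (r : ℂ) * Complex.exp (φ * Complex.I) ≠ 0 :=
    mul_ne_zero (Complex.ofReal_ne_zero.2 hr.ne') (Complex.exp_ne_zero _)
  rw [Complex.cpow_def_of_ne_zero hne, Complex.log_ofReal_mul hr (Complex.exp_ne_zero _),
    Complex.log_exp (by simpa using hφ.1) (by simpa using hφ.2), rpow_def_of_pos hr, add_mul,
    Complex.exp_add]
  push_cast
  ring_nf

lemma one_add_exp_mul_I (θ : ℝ) : 1 + Complex.exp (θ * Complex.I) =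
    (2 * cos (θ / 2) : ℝ) * Complex.exp ((θ / 2 : ℝ) * Complex.I) := by
  have hsq : Complex.exp (θ * Complex.I) = Complex.exp ((θ / 2 : ℝ) * Complex.I) ^ 2 := by
    rw [← Complex.exp_nat_mul]
    push_cast
    ring_nf
  have hinv := Complex.exp_ne_zero ((θ / 2 : ℝ) * Complex.I)
  rw [hsq, Complex.ofReal_mul, Complex.ofReal_cos, Complex.cos, neg_mul, Complex.exp_neg]
  push_cast at hinv ⊢
  field_simp
  ring

lemma one_sub_exp_mul_I (θ : ℝ) : 1 - Complex.exp (θ * Complex.I) =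
    (2 * sin (θ / 2) : ℝ) * Complex.exp (((θ - π) / 2 : ℝ) * Complex.I) := by
  have h := one_add_exp_mul_I (θ - π)
  rw [Complex.ofReal_sub, sub_mul, Complex.exp_sub, Complex.exp_pi_mul_I, div_neg, div_one,
    sub_div θ, cos_sub_pi_div_two] at h
  rw [sub_eq_add_neg, h, sub_div]

/-- The amplitude `(2 cos(π/4 + t/2))^γ (2 sin(π/4 + t/2))^η e^{i(γ+η)t/2}` that is integrated
against `cos^n t` in the Laplace-type integral for `P_n^{(γ,η)}(0)`. -/
noncomputable def laplaceAmplitude (γ η t : ℝ) : ℂ :=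
  ((2 * cos (π / 4 + t / 2)) ^ γ * (2 * sin (π / 4 + t / 2)) ^ η : ℝ) *
    Complex.exp (((γ + η) / 2 * t : ℝ) * Complex.I)

/-- The phase `ω_γ(Nπ/2) = nπ/2 + (η - γ)π/4` of the degree `n` Jacobi polynomial at the
midpoint. -/
noncomputable def midpointPhase (γ η : ℝ) (n : ℕ) : ℝ := n * π / 2 + (η - γ) * π / 4

lemma two_mul_cos_pi_div_four_add_pos {t : ℝ} (ht : t ∈ Set.Ioo (-(π / 2)) (π / 2)) :
    0 < 2 * cos (π / 4 + t / 2) :=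
  mul_pos two_pos (cos_pos_of_mem_Ioo ⟨by linarith [ht.1, pi_pos], by linarith [ht.2]⟩)

lemma two_mul_sin_pi_div_four_add_pos {t : ℝ} (ht : t ∈ Set.Ioo (-(π / 2)) (π / 2)) :
    0 < 2 * sin (π / 4 + t / 2) :=
  mul_pos two_pos (sin_pos_of_pos_of_lt_pi (by linarith [ht.1]) (by linarith [ht.2, pi_pos]))

lemma two_mul_cos_eq_mul_half_angle (t : ℝ) :
    2 * cos t = 2 * cos (π / 4 + t / 2) * (2 * sin (π / 4 + t / 2)) := by
  rw [← sin_add_pi_div_two, show t + π / 2 = 2 * (π / 4 + t / 2) by ring, sin_two_mul]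
  ring

lemma rodriguesIntegrand_add_pi_div_two (γ η : ℝ) (n : ℕ) {t : ℝ}
    (ht : t ∈ Set.Ioo (-(π / 2)) (π / 2)) :
    rodriguesIntegrand γ η n (t + π / 2) =
      2 ^ n * Complex.exp (-midpointPhase γ η n * Complex.I) *
        ((cos t ^ n : ℝ) • laplaceAmplitude γ η t) := by
  have hc := two_mul_cos_pi_div_four_add_pos ht
  have hs := two_mul_sin_pi_div_four_add_pos ht
  have hpow : (2 * cos (π / 4 + t / 2)) ^ (n + γ) * (2 * sin (π / 4 + t / 2)) ^ (n + η) =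
      2 ^ n * cos t ^ n * ((2 * cos (π / 4 + t / 2)) ^ γ * (2 * sin (π / 4 + t / 2)) ^ η) := by
    rw [rpow_add hc, rpow_add hs, rpow_natCast, rpow_natCast, ← mul_pow,
      two_mul_cos_eq_mul_half_angle t, mul_pow (2 * cos _) (2 * sin _)]
    ring
  have hexp : Complex.exp (-(n * (t + π / 2 : ℝ) * Complex.I)) *
      Complex.exp (((n + η) * ((t + π / 2 - π) / 2) : ℝ) * Complex.I) *
      Complex.exp (((n + γ) * (π / 4 + t / 2) : ℝ) * Complex.I) =
      Complex.exp (-midpointPhase γ η n * Complex.I) *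
        Complex.exp (((γ + η) / 2 * t : ℝ) * Complex.I) := by
    rw [← Complex.exp_add, ← Complex.exp_add, ← Complex.exp_add, midpointPhase]
    push_cast
    ring_nf
  have hhalf : (t + π / 2) / 2 = π / 4 + t / 2 := by ring
  rw [rodriguesIntegrand, rodriguesKernel, one_add_exp_mul_I, one_sub_exp_mul_I, hhalf,
    ofReal_mul_exp_cpow hc ⟨by linarith [ht.1, pi_pos], by linarith [ht.2, pi_pos]⟩,
    ofReal_mul_exp_cpow hs ⟨by linarith [ht.1, pi_pos], by linarith [ht.2, pi_pos]⟩,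
    laplaceAmplitude, Complex.real_smul]
  have hpowC := congrArg Complex.ofReal hpow
  simp only [Complex.ofReal_mul, Complex.ofReal_pow, Complex.ofReal_ofNat] at hpowC hexp ⊢
  linear_combination ((2 * cos (π / 4 + t / 2)) ^ (n + γ) : ℝ) *
    ((2 * sin (π / 4 + t / 2)) ^ (n + η) : ℝ) * hexp +
    Complex.exp (-midpointPhase γ η n * Complex.I) *
      Complex.exp (((γ + η) / 2 : ℝ) * t * Complex.I) * hpowC

lemma jacobiP_zero_eq_integral {γ η : ℝ} (hγ : -1 < γ) (hη : -1 < η) {n : ℕ} (hn : 1 ≤ n) :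
    jacobiP γ η n 0 = π⁻¹ * (Complex.exp (-midpointPhase γ η n * Complex.I) *
      ∫ t in -(π / 2)..π / 2, cos t ^ n • laplaceAmplitude γ η t).re := by
  have hcont := continuous_rodriguesIntegrand hγ hη hn
  have hshift := intervalIntegral.integral_comp_add_right (a := -(π / 2)) (b := π / 2)
    (rodriguesIntegrand γ η n) (π / 2)
  rw [neg_add_cancel, add_halves, intervalIntegral.integral_congr_Ioo_of_le (by linarith [pi_pos])
    fun t ht => rodriguesIntegrand_add_pi_div_two γ η n ht,
    intervalIntegral.integral_const_mul] at hshift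
  have hre : ∫ θ in (0 : ℝ)..π, (rodriguesIntegrand γ η n θ).re =
      (∫ θ in (0 : ℝ)..π, rodriguesIntegrand γ η n θ).re :=
    Complex.reCLM.intervalIntegral_comp_comm (hcont.intervalIntegrable _ _)
  rw [integral_rodriguesIntegrand_re hγ hη hn, ← hshift, mul_assoc, mul_assoc,
    ← Complex.ofReal_ofNat, ← Complex.ofReal_pow, Complex.re_ofReal_mul, mul_left_comm] at hre
  rw [eq_inv_mul_iff_mul_eq₀ pi_ne_zero]
  exact mul_left_cancel₀ (by positivity) hre

end LaplaceIntegral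

section LaplaceMethod

open Filter Topology Asymptotics

lemma integral_cos_pow_eq_wallisIntegral (n : ℕ) :
    ∫ t in -(π / 2)..π / 2, cos t ^ n = wallisIntegral n := by
  have h := intervalIntegral.integral_comp_add_right (a := -(π / 2)) (b := π / 2)
    (fun x => sin x ^ n) (π / 2)
  simp only [sin_add_pi_div_two, neg_add_cancel, add_halves] at h
  exact h

lemma integral_cos_pow_mul_sin_sq (n : ℕ) :
    ∫ t in -(π / 2)..π / 2, cos t ^ n * sin t ^ 2 = wallisIntegral n / (n + 2) := by
  have h : ∀ t, cos t ^ n * sin t ^ 2 = cos t ^ n - cos t ^ (n + 2) := fun t => by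
    rw [sin_sq]
    ring
  simp only [h]
  rw [intervalIntegral.integral_sub (Continuous.intervalIntegrable (by fun_prop) _ _)
    (Continuous.intervalIntegrable (by fun_prop) _ _)]
  simp only [integral_cos_pow_eq_wallisIntegral, wallisIntegral_add_two]
  field_simp
  ring

lemma integral_cos_pow_mul_sin_pow_four (n : ℕ) :
    ∫ t in -(π / 2)..π / 2, cos t ^ n * sin t ^ 4 =
      3 * wallisIntegral n / ((n + 2) * (n + 4)) := by
  have h : ∀ t, cos t ^ n * sin t ^ 4 = cos t ^ n * sin t ^ 2 - cos t ^ (n + 2) * sin t ^ 2 :=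
    fun t => by
      rw [show sin t ^ 4 = sin t ^ 2 * sin t ^ 2 by ring, sin_sq]
      ring
  simp only [h]
  rw [intervalIntegral.integral_sub (Continuous.intervalIntegrable (by fun_prop) _ _)
    (Continuous.intervalIntegrable (by fun_prop) _ _)]
  simp only [integral_cos_pow_mul_sin_sq, wallisIntegral_add_two]
  push_cast
  field_simp
  ring

lemma wallisIntegral_le_two_mul_succ (n : ℕ) :
    wallisIntegral n ≤ 2 * wallisIntegral (n + 1) := by
  cases n with
  | zero =>
    norm_num [wallisIntegral]
    linarith [pi_lt_four]
  | succ k =>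
    have hmono : wallisIntegral (k + 1) ≤ wallisIntegral k := integral_sin_pow_succ_le k
    have hratio : (1 : ℝ) / 2 ≤ (k + 1) / (k + 2) := by
      rw [div_le_div_iff₀ two_pos (by positivity)]
      linarith [k.cast_nonneg (α := ℝ)]
    rw [wallisIntegral_add_two]
    nlinarith [wallisIntegral_pos k]

lemma sq_sub_sin_sq_isBigO : (fun t : ℝ => t ^ 2 - sin t ^ 2) =O[𝓝 0] fun t => t ^ 4 := by
  refine IsBigO.of_bound 1 ?_
  filter_upwards [Metric.closedBall_mem_nhds (0 : ℝ) one_half_pos] with t ht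
  have ht : |t| ≤ 1 / 2 := by simpa using ht
  have h := cos_bound (x := 2 * t) (by rw [abs_mul, abs_two]; linarith)
  rw [norm_eq_abs, norm_of_nonneg (by positivity), sin_sq_eq_half_sub,
    show t ^ 2 - (1 / 2 - cos (2 * t) / 2) = (cos (2 * t) - (1 - (2 * t) ^ 2 / 2)) / 2 by ring,
    abs_div, abs_two]
  rw [Even.pow_abs (by decide)] at h
  linarith [show 0 ≤ t ^ 4 by positivity]

lemma isBigO_principal_of_forall_nhdsWithin {X E F : Type*} [TopologicalSpace X]
    [SeminormedAddCommGroup E] [SeminormedAddCommGroup F] {f : X → E} {g : X → F} {K : Set X}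
    (hK : IsCompact K) (h : ∀ x ∈ K, f =O[𝓝[K] x] g) : f =O[𝓟 K] g := by
  refine hK.induction_on (p := fun s => f =O[𝓟 s] g) (by simp)
    (fun s t hst ht => ht.mono (principal_mono.2 hst))
    (fun s t hs ht => by rw [← sup_principal]; exact hs.sup ht) fun x hx => ?_
  obtain ⟨c, hc⟩ := (h x hx).bound
  exact ⟨_, hc, IsBigO.of_bound c (eventually_principal.2 fun y hy => hy)⟩

variable {E : Type*} [NormedAddCommGroup E] [NormedSpace ℝ E]

lemma analyticAt_add_comp_neg_sub_isBigO [CompleteSpace E] {f : ℝ → E} (hf : AnalyticAt ℝ f 0) :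
    (fun t => f t + f (-t) - (2 : ℝ) • f 0 - sin t ^ 2 • iteratedDeriv 2 f 0) =O[𝓝 0]
      fun t => sin t ^ 4 := by
  obtain ⟨F, hF, htaylor⟩ := hf.exists_eventuallyEq_sum_add_pow_mul 4
  have hneg : Tendsto (fun t : ℝ => -t) (𝓝 0) (𝓝 0) := by simpa using tendsto_neg (0 : ℝ)
  have hF := hF.continuousAt
  have hrest : (fun t => F t + F (-t)) =O[𝓝 0] fun _ => (1 : ℝ) :=
    (hF.tendsto.add (hF.tendsto.comp hneg)).isBigO_one ℝ
  have hmain : (fun t : ℝ => t ^ 4 • (F t + F (-t)) + (t ^ 2 - sin t ^ 2) • iteratedDeriv 2 f 0)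
      =O[𝓝 0] fun t => t ^ 4 := by
    refine IsBigO.add ?_ ?_
    · simpa using (isBigO_refl (fun t : ℝ => t ^ 4) _).smul hrest
    · simpa using sq_sub_sin_sq_isBigO.smul
        (isBigO_const_const (iteratedDeriv 2 f 0) (one_ne_zero (α := ℝ)) _)
  refine (hmain.congr' ?_ EventuallyEq.rfl).trans (isEquivalent_sin.isBigO_symm.pow 4)
  filter_upwards [htaylor, hneg.eventually htaylor] with t ht ht'
  rw [ht, ht']
  simp only [Finset.sum_range_succ, Finset.range_zero, Finset.sum_empty, Nat.factorial,
    iteratedDeriv_zero]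
  module

lemma continuousOn_cos_smul_comp_neg {f : ℝ → E}
    (hcont : ContinuousOn (fun t => cos t • f t) (Set.Icc (-(π / 2)) (π / 2))) :
    ContinuousOn (fun t => cos t • f (-t)) (Set.Icc (-(π / 2)) (π / 2)) := by
  have hmaps : Set.MapsTo (fun t : ℝ => -t) (Set.Icc (-(π / 2)) (π / 2))
      (Set.Icc (-(π / 2)) (π / 2)) := fun t ht => ⟨by linarith [ht.2], by linarith [ht.1]⟩
  simpa only [Function.comp_def, cos_neg] using hcont.comp continuousOn_neg hmaps

lemma exists_norm_cos_smul_even_part_le [CompleteSpace E] {f : ℝ → E} (hf : AnalyticAt ℝ f 0)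
    (hcont : ContinuousOn (fun t => cos t • f t) (Set.Icc (-(π / 2)) (π / 2))) :
    ∃ K, ∀ t ∈ Set.Icc (-(π / 2)) (π / 2),
      ‖cos t • (f t + f (-t) - (2 : ℝ) • f 0 - sin t ^ 2 • iteratedDeriv 2 f 0)‖ ≤
        K * sin t ^ 4 := by
  have hneg := continuousOn_cos_smul_comp_neg hcont
  have hr : ContinuousOn
      (fun t => cos t • (f t + f (-t) - (2 : ℝ) • f 0 - sin t ^ 2 • iteratedDeriv 2 f 0))
      (Set.Icc (-(π / 2)) (π / 2)) := by
    simp only [smul_sub, smul_add]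
    exact ((hcont.add hneg).sub (by fun_prop)).sub (by fun_prop)
  have hlocal : ∀ x ∈ Set.Icc (-(π / 2)) (π / 2),
      (fun t => cos t • (f t + f (-t) - (2 : ℝ) • f 0 - sin t ^ 2 • iteratedDeriv 2 f 0))
        =O[𝓝[Set.Icc (-(π / 2)) (π / 2)] x] fun t => sin t ^ 4 := by
    intro x hx
    rcases eq_or_ne x 0 with rfl | hx0
    · have hcos : cos =O[𝓝 0] fun _ => (1 : ℝ) := continuous_cos.continuousAt.isBigO_one ℝ
      have h := hcos.smul (analyticAt_add_comp_neg_sub_isBigO hf)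
      simp only [one_smul] at h
      exact h.mono nhdsWithin_le_nhds
    · have hsin : sin x ≠ 0 := fun h =>
        hx0 ((sin_eq_zero_iff_of_lt_of_lt (by linarith [hx.1, pi_pos])
          (by linarith [hx.2, pi_pos])).1 h)
      have hpos : 0 < ‖sin x ^ 4‖ := norm_pos_iff.2 (pow_ne_zero 4 hsin)
      have hcont : ContinuousAt (fun t => ‖sin t ^ 4‖) x := by fun_prop
      refine ((hr x hx).isBigO_one ℝ).trans (IsBigO.mono ?_ nhdsWithin_le_nhds)
      exact (isBigO_const_left_iff_pos_le_norm one_ne_zero).2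
        ⟨_, half_pos hpos, hcont.tendsto.eventually_const_le (half_lt_self hpos)⟩
  obtain ⟨K, hK⟩ := (isBigO_principal_of_forall_nhdsWithin isCompact_Icc hlocal).bound
  refine ⟨K, fun t ht => ?_⟩
  have h := eventually_principal.1 hK t ht
  rwa [norm_of_nonneg (by positivity)] at h

lemma intervalIntegrable_cos_pow_smul {g : ℝ → E}
    (hcont : ContinuousOn (fun t => cos t • g t) (Set.Icc (-(π / 2)) (π / 2))) (n : ℕ) :
    IntervalIntegrable (fun t => cos t ^ (n + 1) • g t) volume (-(π / 2)) (π / 2) := by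
  refine ContinuousOn.intervalIntegrable ?_
  rw [Set.uIcc_of_le (by linarith [pi_pos])]
  simp only [pow_succ, mul_smul]
  exact ContinuousOn.smul (by fun_prop) hcont

lemma integral_cos_pow_smul_even_part [CompleteSpace E] {f : ℝ → E}
    (hcont : ContinuousOn (fun t => cos t • f t) (Set.Icc (-(π / 2)) (π / 2))) (v w : E) (n : ℕ) :
    ∫ t in -(π / 2)..π / 2, cos t ^ (n + 1) • (f t + f (-t) - (2 : ℝ) • v - sin t ^ 2 • w) =
      (2 : ℝ) • ((∫ t in -(π / 2)..π / 2, cos t ^ (n + 1) • f t) -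
        wallisIntegral (n + 1) • (v + (((n + 1 : ℕ) + 2 : ℝ)⁻¹ / 2) • w)) := by
  have hf := intervalIntegrable_cos_pow_smul hcont n
  have hneg := intervalIntegrable_cos_pow_smul (continuousOn_cos_smul_comp_neg hcont) n
  have hreflect : ∫ t in -(π / 2)..π / 2, cos t ^ (n + 1) • f (-t) =
      ∫ t in -(π / 2)..π / 2, cos t ^ (n + 1) • f t := by
    simpa using intervalIntegral.integral_comp_neg (a := -(π / 2)) (b := π / 2)
      fun t => cos t ^ (n + 1) • f t
  have hv : IntervalIntegrable (fun t => cos t ^ (n + 1) • (2 : ℝ) • v) volume (-(π / 2)) (π / 2) :=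
    Continuous.intervalIntegrable (by fun_prop) _ _
  have hw : IntervalIntegrable (fun t => (cos t ^ (n + 1) * sin t ^ 2) • w) volume
      (-(π / 2)) (π / 2) := Continuous.intervalIntegrable (by fun_prop) _ _
  simp only [smul_sub, smul_add, smul_smul (cos _ ^ (n + 1)) (sin _ ^ 2)]
  rw [intervalIntegral.integral_sub ((hf.add hneg).sub hv) hw,
    intervalIntegral.integral_sub (hf.add hneg) hv, intervalIntegral.integral_add hf hneg, hreflect,
    intervalIntegral.integral_smul_const, intervalIntegral.integral_smul_const,
    integral_cos_pow_eq_wallisIntegral, integral_cos_pow_mul_sin_sq]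
  module

lemma exists_norm_integral_cos_pow_smul_sub_le [CompleteSpace E] {f : ℝ → E}
    (hf : AnalyticAt ℝ f 0)
    (hcont : ContinuousOn (fun t => cos t • f t) (Set.Icc (-(π / 2)) (π / 2))) :
    ∃ K, ∀ n : ℕ, ‖(∫ t in -(π / 2)..π / 2, cos t ^ (n + 1) • f t) - wallisIntegral (n + 1) •
      (f 0 + (((n + 1 : ℕ) + 2 : ℝ)⁻¹ / 2) • iteratedDeriv 2 f 0)‖ ≤
        K * wallisIntegral n / ((n + 2) * (n + 4)) := by
  obtain ⟨K, hK⟩ := exists_norm_cos_smul_even_part_le hf hcont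
  refine ⟨3 / 2 * K, fun n => ?_⟩
  have hbound : ‖∫ t in -(π / 2)..π / 2, cos t ^ (n + 1) •
      (f t + f (-t) - (2 : ℝ) • f 0 - sin t ^ 2 • iteratedDeriv 2 f 0)‖ ≤
      ∫ t in -(π / 2)..π / 2, K * (cos t ^ n * sin t ^ 4) := by
    refine intervalIntegral.norm_integral_le_of_norm_le (by linarith [pi_pos])
      (ae_of_all _ fun t ht => ?_) (Continuous.intervalIntegrable (by fun_prop) _ _)
    have hcos : 0 ≤ cos t := cos_nonneg_of_mem_Icc (Set.Ioc_subset_Icc_self ht)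
    rw [pow_succ, mul_smul, norm_smul, norm_of_nonneg (by positivity), mul_left_comm]
    exact mul_le_mul_of_nonneg_left (hK t (Set.Ioc_subset_Icc_self ht)) (by positivity)
  rw [integral_cos_pow_smul_even_part hcont, norm_smul, norm_of_nonneg two_pos.le,
    intervalIntegral.integral_const_mul, integral_cos_pow_mul_sin_pow_four] at hbound
  linarith [show K * (3 * wallisIntegral n / ((n + 2) * (n + 4))) =
    2 * (3 / 2 * K * wallisIntegral n / ((n + 2) * (n + 4))) by ring]

lemma integral_cos_pow_smul_sub_isBigO [CompleteSpace E] {f : ℝ → E} (hf : AnalyticAt ℝ f 0)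
    (hcont : ContinuousOn (fun t => cos t • f t) (Set.Icc (-(π / 2)) (π / 2))) :
    (fun n : ℕ => (wallisIntegral n)⁻¹ • (∫ t in -(π / 2)..π / 2, cos t ^ n • f t) -
      (f 0 + (((n : ℝ) + 2)⁻¹ / 2) • iteratedDeriv 2 f 0)) =O[atTop]
        fun n : ℕ => ((n : ℝ) ^ 2)⁻¹ := by
  obtain ⟨K, hK⟩ := exists_norm_integral_cos_pow_smul_sub_le hf hcont
  refine IsBigO.of_bound (2 * |K|) ((eventually_ge_atTop 1).mono fun n hn => ?_)
  obtain ⟨m, rfl⟩ := Nat.exists_eq_add_of_le' hn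
  have hW := wallisIntegral_pos (m + 1)
  have hden : (0 : ℝ) < (m + 1 : ℕ) ^ 2 := by positivity
  have hden_le : ((m + 1 : ℕ) : ℝ) ^ 2 ≤ (m + 2) * (m + 4) := by
    push_cast
    nlinarith [m.cast_nonneg (α := ℝ)]
  have hbound : K * wallisIntegral m / ((m + 2) * (m + 4)) ≤
      |K| * (2 * wallisIntegral (m + 1)) / ((m + 1 : ℕ) : ℝ) ^ 2 := by
    refine div_le_div₀ (by positivity) ?_ hden hden_le
    exact mul_le_mul (le_abs_self K) (wallisIntegral_le_two_mul_succ m) (wallisIntegral_pos m).le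
      (abs_nonneg K)
  have hsmul : ∀ v w : E, (wallisIntegral (m + 1))⁻¹ • v - w =
      (wallisIntegral (m + 1))⁻¹ • (v - wallisIntegral (m + 1) • w) := fun v w => by
    rw [smul_sub, inv_smul_smul₀ hW.ne']
  rw [hsmul, norm_smul, norm_of_nonneg (by positivity), norm_of_nonneg (by positivity),
    inv_mul_le_iff₀ hW]
  refine ((hK m).trans hbound).trans_eq ?_
  rw [div_eq_mul_inv]
  ring

end LaplaceMethod

section MidpointExpansion

open Filter Topology Asymptotics

variable {γ η : ℝ}

lemma continuousOn_cos_smul_laplaceAmplitude (hγ : -1 < γ) (hη : -1 < η) :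
    ContinuousOn (fun t => cos t • laplaceAmplitude γ η t) (Set.Icc (-(π / 2)) (π / 2)) := by
  have hcont : Continuous fun t : ℝ =>
      (((2 * cos (π / 4 + t / 2)) ^ (γ + 1) * (2 * sin (π / 4 + t / 2)) ^ (η + 1) / 2 : ℝ) : ℂ) *
        Complex.exp (((γ + η) / 2 * t : ℝ) * Complex.I) := by
    have hpow_cos : Continuous fun t : ℝ => (2 * cos (π / 4 + t / 2)) ^ (γ + 1) :=
      Continuous.rpow_const (by fun_prop) fun _ => Or.inr (by linarith)
    have hpow_sin : Continuous fun t : ℝ => (2 * sin (π / 4 + t / 2)) ^ (η + 1) :=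
      Continuous.rpow_const (by fun_prop) fun _ => Or.inr (by linarith)
    fun_prop
  refine hcont.continuousOn.congr fun t ht => ?_
  have hc : 0 ≤ 2 * cos (π / 4 + t / 2) :=
    mul_nonneg two_pos.le (cos_nonneg_of_mem_Icc ⟨by linarith [ht.1, pi_pos], by linarith [ht.2]⟩)
  have hs : 0 ≤ 2 * sin (π / 4 + t / 2) :=
    mul_nonneg two_pos.le
      (sin_nonneg_of_mem_Icc ⟨by linarith [ht.1], by linarith [ht.2, pi_pos]⟩)
  simp only [laplaceAmplitude]
  rw [rpow_add_one' hc (by linarith), rpow_add_one' hs (by linarith), Complex.real_smul,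
    ← mul_assoc, ← Complex.ofReal_mul]
  congr 2
  linear_combination (2 * cos (π / 4 + t / 2)) ^ γ * (2 * sin (π / 4 + t / 2)) ^ η / 2 *
    two_mul_cos_eq_mul_half_angle t

lemma analyticAt_laplaceAmplitude (γ η : ℝ) : AnalyticAt ℝ (laplaceAmplitude γ η) 0 := by
  have hmem : (0 : ℝ) ∈ Set.Ioo (-(π / 2)) (π / 2) := ⟨by linarith [pi_pos], by linarith [pi_pos]⟩
  have hreal : AnalyticAt ℝ (fun t : ℝ => exp (log (2 * cos (π / 4 + t / 2)) * γ) *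
      exp (log (2 * sin (π / 4 + t / 2)) * η)) 0 := by
    have hcos : AnalyticAt ℝ (fun t : ℝ => log (2 * cos (π / 4 + t / 2))) 0 :=
      AnalyticAt.log (by fun_prop) (two_mul_cos_pi_div_four_add_pos hmem)
    have hsin : AnalyticAt ℝ (fun t : ℝ => log (2 * sin (π / 4 + t / 2))) 0 :=
      AnalyticAt.log (by fun_prop) (two_mul_sin_pi_div_four_add_pos hmem)
    fun_prop
  have hofReal : ∀ x : ℝ, AnalyticAt ℝ ((↑) : ℝ → ℂ) x := Complex.ofRealCLM.analyticAt
  have hphase : AnalyticAt ℝ (fun t : ℝ => (((γ + η) / 2 * t : ℝ) : ℂ) * Complex.I) 0 :=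
    ((hofReal _).comp (f := fun t : ℝ => (γ + η) / 2 * t) (by fun_prop)).mul analyticAt_const
  refine (((hofReal _).comp hreal).mul
    ((analyticAt_cexp.restrictScalars (𝕜 := ℝ)).comp hphase)).congr ?_
  filter_upwards [Ioo_mem_nhds hmem.1 hmem.2] with t ht
  simp [laplaceAmplitude, rpow_def_of_pos (two_mul_cos_pi_div_four_add_pos ht),
    rpow_def_of_pos (two_mul_sin_pi_div_four_add_pos ht)]

lemma hasDerivAt_laplaceAmplitude (γ η : ℝ) {t : ℝ} (ht : t ∈ Set.Ioo (-(π / 2)) (π / 2)) :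
    HasDerivAt (laplaceAmplitude γ η)
      (((η / 2 * (cos (π / 4 + t / 2) / sin (π / 4 + t / 2)) -
        γ / 2 * (sin (π / 4 + t / 2) / cos (π / 4 + t / 2)) : ℝ) + ((γ + η) / 2 : ℝ) * Complex.I) *
          laplaceAmplitude γ η t) t := by
  have hc := two_mul_cos_pi_div_four_add_pos ht
  have hs := two_mul_sin_pi_div_four_add_pos ht
  have harg : HasDerivAt (fun t : ℝ => π / 4 + t / 2) (1 / 2) t :=
    ((hasDerivAt_id t).div_const 2).const_add _
  have hreal := (((harg.cos.const_mul 2).rpow_const (p := γ) (Or.inl hc.ne')).mul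
    ((harg.sin.const_mul 2).rpow_const (p := η) (Or.inl hs.ne'))).ofReal_comp
  have hexp : HasDerivAt (fun t : ℝ => Complex.exp (((γ + η) / 2 * t : ℝ) * Complex.I))
      (Complex.exp (((γ + η) / 2 * t : ℝ) * Complex.I) * (((γ + η) / 2 : ℝ) * Complex.I)) t := by
    simpa using ((((hasDerivAt_id t).const_mul ((γ + η) / 2)).ofReal_comp).mul_const Complex.I).cexp
  refine (hreal.mul hexp).congr_deriv ?_
  simp only [laplaceAmplitude, Pi.mul_apply]
  rw [rpow_sub_one hc.ne', rpow_sub_one hs.ne']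
  push_cast
  field_simp
  ring

lemma laplaceAmplitude_zero (γ η : ℝ) : laplaceAmplitude γ η 0 = (2 ^ ((γ + η) / 2) : ℝ) := by
  have hsqrt : 2 * (√2 / 2) = (2 : ℝ) ^ (1 / 2 : ℝ) := by
    rw [← sqrt_eq_rpow]
    ring
  rw [laplaceAmplitude, zero_div, add_zero, cos_pi_div_four, sin_pi_div_four, hsqrt,
    ← rpow_add (by positivity), ← rpow_mul two_pos.le]
  simp [div_eq_inv_mul]

lemma iteratedDeriv_two_laplaceAmplitude (γ η : ℝ) :
    iteratedDeriv 2 (laplaceAmplitude γ η) 0 = (2 ^ ((γ + η) / 2) : ℝ) *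
      ((-(γ * η + (γ + η) / 2) : ℝ) + ((η ^ 2 - γ ^ 2) / 2 : ℝ) * Complex.I) := by
  have hmem : (0 : ℝ) ∈ Set.Ioo (-(π / 2)) (π / 2) := ⟨by linarith [pi_pos], by linarith [pi_pos]⟩
  have hderiv : deriv (laplaceAmplitude γ η) =ᶠ[𝓝 0] fun t => ((η / 2 *
      (cos (π / 4 + t / 2) / sin (π / 4 + t / 2)) - γ / 2 *
        (sin (π / 4 + t / 2) / cos (π / 4 + t / 2)) : ℝ) + ((γ + η) / 2 : ℝ) * Complex.I) *
          laplaceAmplitude γ η t := by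
    filter_upwards [Ioo_mem_nhds hmem.1 hmem.2] with t ht
    exact (hasDerivAt_laplaceAmplitude γ η ht).deriv
  have harg : HasDerivAt (fun t : ℝ => π / 4 + t / 2) (1 / 2) 0 :=
    ((hasDerivAt_id 0).div_const 2).const_add _
  have hc : cos (π / 4 + 0 / 2) ≠ 0 := by simp
  have hs : sin (π / 4 + 0 / 2) ≠ 0 := by simp
  have hlog := ((((harg.cos.div harg.sin hs).const_mul (η / 2)).sub
    ((harg.sin.div harg.cos hc).const_mul (γ / 2))).ofReal_comp.add_const
      (((γ + η) / 2 : ℝ) * Complex.I)).mul (hasDerivAt_laplaceAmplitude γ η hmem)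
  rw [iteratedDeriv_succ, iteratedDeriv_one, hderiv.deriv_eq]
  refine hlog.deriv.trans ?_
  simp only [Pi.sub_apply, Pi.div_apply, zero_div, add_zero, cos_pi_div_four, sin_pi_div_four]
  rw [laplaceAmplitude_zero]
  push_cast
  field_simp
  ring_nf
  rw [Complex.I_sq]
  ring

lemma re_exp_neg_mul_I_mul (χ a b : ℝ) :
    (Complex.exp (-χ * Complex.I) * (a + b * Complex.I)).re = a * cos χ + b * sin χ := by
  rw [← Complex.ofReal_neg, Complex.exp_mul_I, ← Complex.ofReal_cos, ← Complex.ofReal_sin, cos_neg,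
    sin_neg]
  simp [-Complex.ofReal_cos, -Complex.ofReal_sin]
  ring

lemma inv_natCast_add_sub_isBigO (s t : ℝ) :
    (fun n : ℕ => ((n : ℝ) + s)⁻¹ - ((n : ℝ) + t)⁻¹) =O[atTop] fun n : ℕ => ((n : ℝ) ^ 2)⁻¹ := by
  have hcube : (fun n : ℕ => ((n : ℝ) ^ 3)⁻¹) =O[atTop] fun n : ℕ => ((n : ℝ) ^ 2)⁻¹ := by
    refine IsBigO.of_bound 1 ?_
    filter_upwards [eventually_ge_atTop 1] with n hn
    have hn : (1 : ℝ) ≤ n := by exact_mod_cast hn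
    rw [norm_of_nonneg (by positivity), norm_of_nonneg (by positivity), one_mul]
    gcongr
    norm_num
  refine ((((inv_natCast_add_isBigO s).sub (inv_natCast_add_isBigO t)).trans hcube).add
    ((isBigO_refl (fun n : ℕ => ((n : ℝ) ^ 2)⁻¹) atTop).const_mul_left (t - s))).congr_left
      fun n => ?_
  rw [← inv_pow]
  ring

lemma integral_laplaceAmplitude_sub_isBigO (hγ : -1 < γ) (hη : -1 < η) :
    (fun n : ℕ => (2 ^ ((γ + η) / 2) * wallisIntegral n)⁻¹ •
      (∫ t in -(π / 2)..π / 2, cos t ^ n • laplaceAmplitude γ η t) -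
        ((1 - (jacobiFreq γ η n)⁻¹ * (γ * η / 2 + (γ + η) / 4) : ℝ) +
          ((jacobiFreq γ η n)⁻¹ * ((η ^ 2 - γ ^ 2) / 4) : ℝ) * Complex.I)) =O[atTop]
      fun n : ℕ => ((n : ℝ) ^ 2)⁻¹ := by
  have hlaplace := (integral_cos_pow_smul_sub_isBigO (analyticAt_laplaceAmplitude γ η)
    (continuousOn_cos_smul_laplaceAmplitude hγ hη)).const_smul_left (2 ^ ((γ + η) / 2) : ℝ)⁻¹
  have hfreq := (inv_natCast_add_sub_isBigO 2 ((γ + η + 1) / 2)).smul (isBigO_const_const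
    ((-(γ * η / 2 + (γ + η) / 4) : ℝ) + ((η ^ 2 - γ ^ 2) / 4 : ℝ) * Complex.I)
      (one_ne_zero (α := ℝ)) atTop)
  simp only [smul_eq_mul, mul_one] at hfreq
  refine (hlaplace.add hfreq).congr_left fun n => ?_
  have hA : ((2 ^ ((γ + η) / 2) : ℝ) : ℂ) ≠ 0 := by
    exact_mod_cast (rpow_pos_of_pos two_pos _).ne'
  rw [iteratedDeriv_two_laplaceAmplitude, laplaceAmplitude_zero, jacobiFreq, mul_inv,
    Pi.smul_apply]
  simp only [Complex.real_smul]
  generalize (2 ^ ((γ + η) / 2) : ℝ) = A at *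
  generalize ((n : ℝ) + 2)⁻¹ = x
  generalize ((n : ℝ) + (γ + η + 1) / 2)⁻¹ = y
  generalize (wallisIntegral n)⁻¹ = w
  push_cast
  field_simp
  ring

lemma jacobiP_zero_sub_isBigO (hγ : -1 < γ) (hη : -1 < η) :
    (fun n => π / (2 ^ ((γ + η) / 2) * wallisIntegral n) * jacobiP γ η n 0 -
      ((1 - (jacobiFreq γ η n)⁻¹ * (γ * η / 2 + (γ + η) / 4)) * cos (midpointPhase γ η n) +
        (jacobiFreq γ η n)⁻¹ * ((η ^ 2 - γ ^ 2) / 4) * sin (midpointPhase γ η n))) =O[atTop]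
      fun n : ℕ => ((n : ℝ) ^ 2)⁻¹ := by
  refine (IsBigO.of_bound 1 ?_).trans (integral_laplaceAmplitude_sub_isBigO hγ hη)
  filter_upwards [eventually_ge_atTop 1] with n hn
  rw [jacobiP_zero_eq_integral hγ hη hn, ← re_exp_neg_mul_I_mul, one_mul]
  set I := ∫ t in -(π / 2)..π / 2, cos t ^ n • laplaceAmplitude γ η t
  set e := Complex.exp (-midpointPhase γ η n * Complex.I) with he
  have hnorm : ‖e‖ = 1 := by rw [he, ← Complex.ofReal_neg, Complex.norm_exp_ofReal_mul_I]
  have hscale : π / (2 ^ ((γ + η) / 2) * wallisIntegral n) * (π⁻¹ * (e * I).re) =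
      (e * ((2 ^ ((γ + η) / 2) * wallisIntegral n)⁻¹ • I)).re := by
    rw [mul_smul_comm, Complex.smul_re, smul_eq_mul]
    field_simp
  rw [hscale, ← Complex.sub_re, ← mul_sub]
  refine (Complex.abs_re_le_norm _).trans ?_
  rw [norm_mul, hnorm, one_mul]

end MidpointExpansion

section MidpointAsymptotics

open Filter Topology Asymptotics

variable {γ η : ℝ}

lemma liouvilleWeight_pi_div_two (γ η : ℝ) :
    liouvilleWeight γ η (π / 2) = (2 ^ ((γ + η) / 2) * √2)⁻¹ := by
  have hsqrt : √2 / 2 = (2 : ℝ) ^ (-(1 / 2) : ℝ) := by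
    rw [rpow_neg two_pos.le, ← sqrt_eq_rpow, inv_eq_one_div, sqrt_div_self, inv_eq_one_div]
  rw [liouvilleWeight, div_div, show (2 : ℝ) * 2 = 4 by norm_num, sin_pi_div_four, cos_pi_div_four,
    hsqrt, ← rpow_add (by positivity), ← rpow_mul two_pos.le, sqrt_eq_rpow, ← rpow_add two_pos,
    ← rpow_neg two_pos.le]
  congr 1
  ring

lemma F2fn_pi_div_two (γ η : ℝ) : F2fn γ η (π / 2) = (η ^ 2 - γ ^ 2) / 4 := by
  rw [F2fn, div_div, show (2 : ℝ) * 2 = 4 by norm_num, tan_pi_div_four, cos_pi_div_two]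
  ring

lemma liouvilleLogDeriv_pi_div_two (γ η : ℝ) : liouvilleLogDeriv γ η (π / 2) = (γ - η) / 2 := by
  rw [liouvilleLogDeriv, div_div, show (2 : ℝ) * 2 = 4 by norm_num, sin_pi_div_four,
    cos_pi_div_four, div_self (by positivity)]
  ring

lemma jacobiAmplitude_mul_liouvilleJacobi_pi_div_two (γ η : ℝ) (n : ℕ) :
    jacobiAmplitude γ η n * liouvilleJacobi γ η n (π / 2) =
      midpointFactor γ η n * (π / (2 ^ ((γ + η) / 2) * wallisIntegral n) * jacobiP γ η n 0) := by
  have hW := wallisIntegral_pos n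
  rw [liouvilleJacobi, liouvilleWeight_pi_div_two, cos_pi_div_two, midpointFactor]
  field_simp

lemma jacobiFreq_mul_pi_div_two_sub (γ η : ℝ) (n : ℕ) :
    jacobiFreq γ η n * (π / 2) - (γ * π / 2 + π / 4) = midpointPhase γ η n := by
  rw [jacobiFreq, midpointPhase]
  ring

lemma inv_jacobiFreq_sq_isBigO (γ η : ℝ) :
    (fun n => (jacobiFreq γ η n)⁻¹ ^ 2) =O[atTop] fun n : ℕ => ((n : ℝ) ^ 2)⁻¹ := by
  simpa only [inv_pow] using (inv_jacobiFreq_isBigO γ η).pow 2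

lemma inv_natCast_sq_isBigO (hγη : -1 < γ + η) :
    (fun n : ℕ => ((n : ℝ) ^ 2)⁻¹) =O[atTop] fun n => (jacobiFreq γ η n ^ 2)⁻¹ := by
  have hN : jacobiFreq γ η =O[atTop] fun n : ℕ => (n : ℝ) :=
    isBigO_of_div_tendsto_nhds ((eventually_ne_atTop 0).mono fun n hn hn' =>
      absurd (Nat.cast_eq_zero.1 hn') hn) 1 (tendsto_jacobiFreq_div_natCast γ η)
  exact (hN.pow 2).inv_rev (Eventually.of_forall fun n h =>
    absurd h (pow_pos (jacobiFreq_pos hγη n) 2).ne')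

lemma isBigO_one_of_abs_le {f : ℕ → ℝ} {c : ℝ} (hf : ∀ n, |f n| ≤ c) :
    f =O[atTop] fun _ => (1 : ℝ) :=
  isBigO_of_le' (c := c) _ fun n => by simpa using hf n

/-- The terms `κ / N` in the expansions of `midpointFactor` and of `P_n(0)` cancel. -/
lemma jacobiAmplitude_mul_liouvilleJacobi_sub_isBigO (hγ : -1 < γ) (hη : -1 < η)
    (hγη : -1 < γ + η) :
    (fun n => jacobiAmplitude γ η n * liouvilleJacobi γ η n (π / 2) -
      wkbApprox γ η (jacobiFreq γ η n) (γ * π / 2 + π / 4) (π / 2)) =O[atTop]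
        fun n => (jacobiFreq γ η n ^ 2)⁻¹ := by
  set κ := γ * η / 2 + (γ + η) / 4
  set h := (η ^ 2 - γ ^ 2) / 4
  set N := jacobiFreq γ η
  set χ := midpointPhase γ η
  have hcos : (fun n => cos (χ n)) =O[atTop] fun _ => (1 : ℝ) :=
    isBigO_one_of_abs_le fun n => abs_cos_le_one _
  have hsin : (fun n => sin (χ n)) =O[atTop] fun _ => (1 : ℝ) :=
    isBigO_one_of_abs_le fun n => abs_sin_le_one _
  have hNinv : (fun n => (N n)⁻¹) =O[atTop] fun _ => (1 : ℝ) :=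
    (tendsto_inv_jacobiFreq γ η).isBigO_one ℝ
  have hmain : (fun n => (1 - (N n)⁻¹ * κ) * cos (χ n) + (N n)⁻¹ * h * sin (χ n)) =O[atTop]
      fun _ => (1 : ℝ) := by
    have hNcos := hNinv.mul hcos
    have hNsin := hNinv.mul hsin
    simp only [mul_one] at hNcos hNsin
    exact ((hcos.sub (hNcos.const_mul_left κ)).add (hNsin.const_mul_left h)).congr_left
      fun n => by ring
  have hfactor := (midpointFactor_sub_isBigO hγ hγη).mul hmain
  have hvalue := ((tendsto_midpointFactor hγ hγη).isBigO_one ℝ).mul (jacobiP_zero_sub_isBigO hγ hη)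
  have hcross := (inv_jacobiFreq_sq_isBigO γ η).mul
    ((hsin.const_mul_left (κ * h)).sub (hcos.const_mul_left (κ ^ 2)))
  simp only [mul_one, one_mul] at hfactor hvalue hcross
  refine (((hfactor.add hvalue).add hcross).congr_left fun n => ?_).trans
    (inv_natCast_sq_isBigO hγη)
  rw [jacobiAmplitude_mul_liouvilleJacobi_pi_div_two, wkbApprox, jacobiFreq_mul_pi_div_two_sub,
    F2fn_pi_div_two]
  ring

lemma jacobiFreq_add_one_add_one (γ η : ℝ) (m : ℕ) :
    jacobiFreq (γ + 1) (η + 1) m = jacobiFreq γ η (m + 1) := by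
  rw [jacobiFreq, jacobiFreq]
  push_cast
  ring

lemma jacobiAmplitude_succ_mul (hγη : -1 < γ + η) (m : ℕ) :
    jacobiAmplitude γ η (m + 1) * (m + γ + η + 2) =
      jacobiFreq γ η (m + 1) * jacobiAmplitude (γ + 1) (η + 1) m := by
  have hN := jacobiFreq_pos hγη (m + 1)
  have hnum : Gamma (m + (γ + 1) + (η + 1) + 1) =
      (m + γ + η + 2) * Gamma ((m + 1 : ℕ) + γ + η + 1) := by
    have hpos : (0 : ℝ) < m + γ + η + 2 := by linarith [Nat.cast_nonneg (α := ℝ) m]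
    rw [show (m : ℝ) + (γ + 1) + (η + 1) + 1 = m + γ + η + 2 + 1 by ring, Gamma_add_one hpos.ne',
      Nat.cast_add_one, show (m : ℝ) + 1 + γ + η + 1 = m + γ + η + 2 by ring]
  rw [jacobiAmplitude, jacobiAmplitude, jacobiFreq_add_one_add_one, hnum,
    show (1 : ℝ) / 2 - η = 1 / 2 - (η + 1) + 1 by ring, rpow_add_one hN.ne', Nat.cast_add_one,
    show (m : ℝ) + (γ + 1) + 1 = m + 1 + γ + 1 by ring]
  ring

lemma wkbApproxDeriv_pi_div_two (γ η N : ℝ) (hN : N ≠ 0) :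
    wkbApproxDeriv γ η N (γ * π / 2 + π / 4) (π / 2) =
      (γ - η) / 2 * wkbApprox γ η N (γ * π / 2 + π / 4) (π / 2) -
        N * wkbApprox (γ + 1) (η + 1) N ((γ + 1) * π / 2 + π / 4) (π / 2) -
          ((γ - η) / 2 * ((η ^ 2 - γ ^ 2) / 4) + liouvillePotential γ η (π / 2) / 2) * N⁻¹ *
            sin (N * (π / 2) - (γ * π / 2 + π / 4)) := by
  rw [wkbApproxDeriv, wkbApprox, wkbApprox, F2fn_pi_div_two, F2fn_pi_div_two,
    show N * (π / 2) - ((γ + 1) * π / 2 + π / 4) =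
      N * (π / 2) - (γ * π / 2 + π / 4) - π / 2 by ring, cos_sub_pi_div_two, sin_sub_pi_div_two]
  field_simp
  ring

lemma jacobiAmplitude_mul_liouvilleJacobiDeriv_sub_isBigO (hγ : -1 < γ) (hη : -1 < η)
    (hγη : -1 < γ + η) :
    (fun m => jacobiAmplitude γ η (m + 1) * liouvilleJacobiDeriv γ η m (π / 2) -
      wkbApproxDeriv γ η (jacobiFreq γ η (m + 1)) (γ * π / 2 + π / 4) (π / 2)) =O[atTop]
        fun m => (jacobiFreq γ η (m + 1))⁻¹ := by
  set a := (γ - η) / 2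
  set N : ℕ → ℝ := fun m => jacobiFreq γ η (m + 1)
  have hNpos : ∀ m, 0 < N m := fun m => jacobiFreq_pos hγη (m + 1)
  have hNinv : (fun m => (N m)⁻¹) =O[atTop] fun _ => (1 : ℝ) :=
    ((tendsto_inv_jacobiFreq γ η).comp (tendsto_add_atTop_nat 1)).isBigO_one ℝ
  have hrefl := isBigO_refl (fun m => (N m)⁻¹) atTop
  have hvalue : (fun m => jacobiAmplitude γ η (m + 1) * liouvilleJacobi γ η (m + 1) (π / 2) -
      wkbApprox γ η (N m) (γ * π / 2 + π / 4) (π / 2)) =O[atTop] fun m => (N m)⁻¹ :=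
    ((jacobiAmplitude_mul_liouvilleJacobi_sub_isBigO hγ hη hγη).comp_tendsto
      (tendsto_add_atTop_nat 1)).trans <| (hNinv.mul hrefl).congr
        (fun m => by simp only [Function.comp_apply, sq, mul_inv, N]) fun m => one_mul _
  have hshift : (fun m => N m * (jacobiAmplitude (γ + 1) (η + 1) m *
      liouvilleJacobi (γ + 1) (η + 1) m (π / 2) -
        wkbApprox (γ + 1) (η + 1) (N m) ((γ + 1) * π / 2 + π / 4) (π / 2))) =O[atTop]
          fun m => (N m)⁻¹ := by
    refine ((isBigO_refl N atTop).mul (jacobiAmplitude_mul_liouvilleJacobi_sub_isBigO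
      (γ := γ + 1) (η := η + 1) (by linarith) (by linarith) (by linarith))).congr
        (fun m => by rw [jacobiFreq_add_one_add_one]) fun m => ?_
    rw [jacobiFreq_add_one_add_one, sq, mul_inv]
    exact mul_inv_cancel_left₀ (hNpos m).ne' _
  have hsin : (fun m => (N m)⁻¹ * sin (N m * (π / 2) - (γ * π / 2 + π / 4))) =O[atTop]
      fun m => (N m)⁻¹ := by
    simpa only [mul_one] using hrefl.mul (isBigO_one_of_abs_le fun m => abs_sin_le_one _)
  refine (((hvalue.const_mul_left a).sub hshift).add
    (hsin.const_mul_left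
      (a * ((η ^ 2 - γ ^ 2) / 4) + liouvillePotential γ η (π / 2) / 2))).congr_left fun m => ?_
  rw [wkbApproxDeriv_pi_div_two γ η _ (hNpos m).ne', liouvilleJacobiDeriv,
    liouvilleLogDeriv_pi_div_two]
  linear_combination liouvilleJacobi (γ + 1) (η + 1) m (π / 2) * jacobiAmplitude_succ_mul hγη m

lemma exists_midpoint_bounds (hγ : -1 < γ) (hη : -1 < η) (hγη : -1 < γ + η) :
    ∃ D, 0 ≤ D ∧ ∀ m,
      |jacobiAmplitude γ η (m + 1) * liouvilleJacobi γ η (m + 1) (π / 2) -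
        wkbApprox γ η (jacobiFreq γ η (m + 1)) (γ * π / 2 + π / 4) (π / 2)| ≤
          D / jacobiFreq γ η (m + 1) ^ 2 ∧
      |jacobiAmplitude γ η (m + 1) * liouvilleJacobiDeriv γ η m (π / 2) -
        wkbApproxDeriv γ η (jacobiFreq γ η (m + 1)) (γ * π / 2 + π / 4) (π / 2)| ≤
          D / jacobiFreq γ η (m + 1) := by
  obtain ⟨D₁, hD₁, hvalue⟩ := bound_of_isBigO_nat_atTop
    (jacobiAmplitude_mul_liouvilleJacobi_sub_isBigO hγ hη hγη)
  obtain ⟨D₂, -, hderiv⟩ := bound_of_isBigO_nat_atTop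
    (jacobiAmplitude_mul_liouvilleJacobiDeriv_sub_isBigO hγ hη hγη)
  refine ⟨max D₁ D₂, le_max_of_le_left hD₁.le, fun m => ⟨?_, ?_⟩⟩ <;>
    have hN := jacobiFreq_pos hγη (m + 1)
  · refine (hvalue (inv_ne_zero (pow_pos hN 2).ne')).trans ?_
    rw [norm_of_nonneg (by positivity), ← div_eq_mul_inv]
    gcongr
    exact le_max_left _ _
  · refine (hderiv (inv_ne_zero hN.ne')).trans ?_
    rw [norm_of_nonneg (by positivity), ← div_eq_mul_inv]
    gcongr
    exact le_max_right _ _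

end MidpointAsymptotics

section RightEndpoint

lemma mAB_pos (a b : ℝ) {φ : ℝ} (hφ : φ ∈ Set.Ioo 0 π) : 0 < mAB a b φ := by
  have hs := sin_half_pos hφ
  have hc := cos_half_pos hφ
  rw [mAB]
  positivity

lemma mAB_mul_liouvilleWeight (γ η : ℝ) {φ : ℝ} (hφ : φ ∈ Set.Ioo 0 π) :
    √π * (mAB γ η φ * liouvilleWeight γ η φ) = 1 := by
  have hs := sin_half_pos hφ
  have hc := cos_half_pos hφ
  rw [mAB, liouvilleWeight, show -γ - 1 / 2 = -(γ + 1 / 2) by ring,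
    show -η - 1 / 2 = -(η + 1 / 2) by ring, rpow_neg hs.le, rpow_neg hc.le, rpow_neg pi_pos.le,
    ← sqrt_eq_rpow]
  field_simp

lemma gamma_ratio_mul_jacobiP_cos (γ η : ℝ) (hγη : -1 < γ + η) (n : ℕ) {φ : ℝ}
    (hφ : φ ∈ Set.Ioo 0 π) :
    Gamma (n + γ + η + 1) / Gamma (n + γ + 1) * jacobiP γ η n (cos φ) =
      jacobiFreq γ η n ^ (η - 1 / 2) * mAB γ η φ *
        (jacobiAmplitude γ η n * liouvilleJacobi γ η n φ) := by
  have hN := jacobiFreq_pos hγη n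
  have hpow : jacobiFreq γ η n ^ (η - 1 / 2) * jacobiFreq γ η n ^ (1 / 2 - η) = 1 := by
    rw [← rpow_add hN, sub_add_sub_cancel, sub_self, rpow_zero]
  rw [jacobiAmplitude, liouvilleJacobi]
  linear_combination (-(Gamma (n + γ + η + 1) / Gamma (n + γ + 1) * jacobiP γ η n (cos φ))) *
    (√π * (mAB γ η φ * liouvilleWeight γ η φ) * hpow + mAB_mul_liouvilleWeight γ η hφ)

/-- The amplitude of the oscillation of `dirichletJ α β L 1` at `cos (π - φ)`. -/
noncomputable def dirichletAmplitude (α β : ℝ) (L : ℕ) (φ : ℝ) : ℝ :=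
  2 ^ (-(α + β + 1)) / Gamma (α + 1) * jacobiFreq β (α + 1) L ^ (α + 1 / 2) * mAB β (α + 1) φ

lemma dirichletAmplitude_pos {α β : ℝ} (hα : -1 < α) (hβ : -1 < β) (L : ℕ) {φ : ℝ}
    (hφ : φ ∈ Set.Ioo 0 π) : 0 < dirichletAmplitude α β L φ := by
  have hN := jacobiFreq_pos (γ := β) (η := α + 1) (by linarith) L
  have hΓ : 0 < Gamma (α + 1) := Gamma_pos_of_pos (by linarith)
  have hm := mAB_pos β (α + 1) hφ
  rw [dirichletAmplitude]
  positivity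

lemma dirichletJ_one_neg_cos {α β : ℝ} (hα : -1 < α) (hβ : -1 < β) (hαβ : α + β + 1 ≠ 0) (L : ℕ)
    {φ : ℝ} (hφ : φ ∈ Set.Ioo 0 π) :
    dirichletJ α β L 1 (-cos φ) = (-1) ^ L * dirichletAmplitude α β L φ *
      (jacobiAmplitude β (α + 1) L * liouvilleJacobi β (α + 1) L φ) := by
  have h := gamma_ratio_mul_jacobiP_cos β (α + 1) (by linarith) L hφ
  rw [show (L : ℝ) + β + (α + 1) + 1 = L + α + β + 2 by ring,
    show α + 1 - 1 / 2 = α + 1 / 2 by ring] at h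
  rw [dirichletJ_one hα hβ hαβ, jacobiP_neg, dirichletAmplitude]
  linear_combination 2 ^ (-(α + β + 1)) / Gamma (α + 1) * (-1) ^ L * h

lemma wkbApprox_eq_cos_omegaA (γ η N φ : ℝ) :
    wkbApprox γ η N (γ * π / 2 + π / 4) φ =
      cos (omegaA γ (N * φ)) + N⁻¹ * F2fn γ η φ * cos (omegaA (γ + 1) (N * φ)) := by
  rw [wkbApprox, omegaA, omegaA, ← sub_sub,
    show N * φ - (γ + 1) * π / 2 - π / 4 = N * φ - γ * π / 2 - π / 4 - π / 2 by ring,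
    cos_sub_pi_div_two]

lemma exists_jacobiAmplitude_mul_liouvilleJacobi_sub_wkbApprox_le {γ η c b : ℝ} (hγ : -1 < γ)
    (hη : -1 < η) (hγη : -1 < γ + η) (hc : 0 < c) (hb : b < π) :
    ∃ C, 0 < C ∧ ∀ n, 1 ≤ n → ∀ φ ∈ Set.Ioc 0 b, c ≤ jacobiFreq γ η n * φ →
      |jacobiAmplitude γ η n * liouvilleJacobi γ η n φ -
        wkbApprox γ η (jacobiFreq γ η n) (γ * π / 2 + π / 4) φ| ≤
          C / (jacobiFreq γ η n * φ) ^ 2 := by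
  obtain ⟨D, hD, hmid⟩ := exists_midpoint_bounds hγ hη hγη
  obtain ⟨C, hC, hwkb⟩ := exists_abs_sub_wkbApprox_le γ η
    (max_lt hb (by linarith [pi_pos])) hc hD ⟨pi_div_two_pos, le_max_right b (π / 2)⟩
  refine ⟨C, hC, fun n hn φ hφ hcφ => ?_⟩
  obtain ⟨m, rfl⟩ := Nat.exists_eq_add_of_le' hn
  refine hwkb _ _ (fun φ => jacobiAmplitude γ η (m + 1) * liouvilleJacobi γ η (m + 1) φ)
    (fun φ => jacobiAmplitude γ η (m + 1) * liouvilleJacobiDeriv γ η m φ)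
    (jacobiFreq_pos hγη (m + 1))
    (fun t ht => (hasDerivAt_liouvilleJacobi hγ hη m ht).const_mul _) (fun t ht => ?_)
    (hmid m).1 (hmid m).2 φ ⟨hφ.1, le_max_of_le_left hφ.2⟩ hcφ
  exact ((hasDerivAt_liouvilleJacobiDeriv hγ hη m ht).const_mul _).congr_deriv (by ring)

lemma exists_dirichletJ_one_neg_cos_sub_le {α β c b : ℝ} (hα : -1 < α) (hβ : -1 < β)
    (hαβ : α + β + 1 ≠ 0) (hc : 0 < c) (hb : b < π) :
    ∃ C, 0 < C ∧ ∀ L, 1 ≤ L → ∀ φ ∈ Set.Ioc 0 b, c ≤ jacobiFreq β (α + 1) L * φ →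
      |dirichletJ α β L 1 (-cos φ) - (-1) ^ L * dirichletAmplitude α β L φ *
        wkbApprox β (α + 1) (jacobiFreq β (α + 1) L) (β * π / 2 + π / 4) φ| ≤
          dirichletAmplitude α β L φ * (C / (jacobiFreq β (α + 1) L * φ) ^ 2) := by
  obtain ⟨C, hC, hbound⟩ := exists_jacobiAmplitude_mul_liouvilleJacobi_sub_wkbApprox_le (γ := β)
    (η := α + 1) hβ (by linarith) (by linarith) hc hb
  refine ⟨C, hC, fun L hL φ hφ hcφ => ?_⟩
  have hφπ : φ ∈ Set.Ioo 0 π := ⟨hφ.1, hφ.2.trans_lt hb⟩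
  have hpos := dirichletAmplitude_pos hα hβ L hφπ
  rw [dirichletJ_one_neg_cos hα hβ hαβ L hφπ, ← mul_sub, abs_mul, abs_mul, abs_neg_one_pow, one_mul,
    abs_of_pos hpos]
  exact mul_le_mul_of_nonneg_left (hbound L hL φ hφ hcφ) hpos.le

end RightEndpoint

theorem dirichletJ_two_term_asymptotics_right_general {α β c ε : ℝ} (hα : -1 < α) (hβ : -1 < β)
    (hαβ : α + β + 1 ≠ 0) (hc : 0 < c) (hε : 0 < ε) :
    ∃ C : ℝ, 0 < C ∧
      ∀ L : ℕ, 1 ≤ L → ∀ θ : ℝ, ε ≤ θ → θ < π - c / L →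
        |dirichletJ α β L 1 (cos θ) -
            (-1 : ℝ) ^ L * (2 : ℝ) ^ (-(α + β + 1)) / Gamma (α + 1) *
              ((L : ℝ) + (α + β + 2) / 2) ^ (α + 1 / 2) * mAB β (α + 1) (π - θ) *
                (cos (omegaA β (((L : ℝ) + (α + β + 2) / 2) * (π - θ))) +
                  ((L : ℝ) + (α + β + 2) / 2)⁻¹ * F2fn β (α + 1) (π - θ) *
                    cos (omegaA (β + 1) (((L : ℝ) + (α + β + 2) / 2) * (π - θ))))| ≤
          C * ((2 : ℝ) ^ (-(α + β + 1)) / Gamma (α + 1)) *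
            ((L : ℝ) + (α + β + 2) / 2) ^ (α + 1 / 2) * mAB β (α + 1) (π - θ) *
              ((L : ℝ) ^ (-(2 : ℝ)) * (π - θ) ^ (-(2 : ℝ))) := by
  obtain ⟨C, hC, hbound⟩ :=
    exists_dirichletJ_one_neg_cos_sub_le hα hβ hαβ hc (sub_lt_self π hε)
  refine ⟨C, hC, fun L hL θ hεθ hθ => ?_⟩
  obtain ⟨φ, rfl⟩ : ∃ φ, θ = π - φ := ⟨π - θ, by ring⟩
  have hL0 : (0 : ℝ) < L := by exact_mod_cast hL
  have hcLφ : c < L * φ := (div_lt_iff₀' hL0).1 (by linarith)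
  have hφ0 : 0 < φ := pos_of_mul_pos_right (hc.trans hcLφ) hL0.le
  have hN : (L : ℝ) + (α + β + 2) / 2 = jacobiFreq β (α + 1) L := by rw [jacobiFreq]; ring
  have hLN : (L : ℝ) ≤ jacobiFreq β (α + 1) L := by linarith
  have hamp := dirichletAmplitude_pos hα hβ L (φ := φ) ⟨hφ0, by linarith⟩
  have herr := hbound L hL φ ⟨hφ0, by linarith⟩ (hcLφ.le.trans (by gcongr))
  have hdecay : C / (jacobiFreq β (α + 1) L * φ) ^ 2 ≤
      C * ((L : ℝ) ^ (-(2 : ℝ)) * φ ^ (-(2 : ℝ))) := by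
    rw [rpow_neg hL0.le, rpow_neg hφ0.le, rpow_two, rpow_two, ← mul_inv, ← mul_pow,
      ← div_eq_mul_inv]
    gcongr
  rw [sub_sub_cancel, cos_pi_sub, hN, ← wkbApprox_eq_cos_omegaA]
  calc _ ≤ _ := by convert herr using 3; rw [dirichletAmplitude]; ring
    _ ≤ _ := mul_le_mul_of_nonneg_left hdecay hamp.le
    _ = _ := by rw [dirichletAmplitude]; ring

/-- Lemma 2.5 ii): two-term asymptotics of the generalised Dirichlet kernel
`v_L^{(α,β)}(1,cos θ)` for `ε ≤ θ < π − c⁽¹⁾/L`, with `L̃ = L + (α+β+2)/2` and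
`θ' = π − θ`; here `c⁽¹⁾ = c⁽¹⁾(α,β) > 0` and `C = C(ε,α,β) > 0`. -/
theorem dirichletJ_two_term_asymptotics_right (α β : ℝ)
    (hα : -(1 / 2 : ℝ) < α) (hβ : -(1 / 2 : ℝ) < β) (hβα : -3 < β - α) :
    ∃ c : ℝ, 0 < c ∧
      ∀ ε : ℝ, 0 < ε → ε < Real.pi / 2 →
        ∃ C : ℝ, 0 < C ∧
          ∀ L : ℕ, 1 ≤ L → ∀ θ : ℝ, ε ≤ θ → θ < Real.pi - c / (L : ℝ) →
            |dirichletJ α β L 1 (Real.cos θ) -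
                (-1 : ℝ) ^ L * (2 : ℝ) ^ (-(α + β + 1)) / Real.Gamma (α + 1) *
                  ((L : ℝ) + (α + β + 2) / 2) ^ (α + 1 / 2) * mAB β (α + 1) (Real.pi - θ) *
                    (Real.cos (omegaA β (((L : ℝ) + (α + β + 2) / 2) * (Real.pi - θ))) +
                      ((L : ℝ) + (α + β + 2) / 2)⁻¹ * F2fn β (α + 1) (Real.pi - θ) *
                        Real.cos
                          (omegaA (β + 1) (((L : ℝ) + (α + β + 2) / 2) * (Real.pi - θ))))| ≤
              C * ((2 : ℝ) ^ (-(α + β + 1)) / Real.Gamma (α + 1)) *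
                ((L : ℝ) + (α + β + 2) / 2) ^ (α + 1 / 2) * mAB β (α + 1) (Real.pi - θ) *
                  ((L : ℝ) ^ uHat β * (Real.pi - θ) ^ nuHat β +
                    (L : ℝ) ^ (-(2 : ℝ)) * (Real.pi - θ) ^ (-(2 : ℝ))) := by
  refine ⟨1, one_pos, fun ε hε _ => ?_⟩
  obtain ⟨C, hC, hbound⟩ := dirichletJ_two_term_asymptotics_right_general (α := α) (β := β)
    (by linarith) (by linarith) (by linarith) one_pos hε
  refine ⟨C, hC, fun L hL θ hεθ hθ => (hbound L hL θ hεθ hθ).trans ?_⟩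
  have hL0 : (0 : ℝ) < L := by exact_mod_cast hL
  have hφ : 0 < π - θ := by linarith [div_pos one_pos hL0]
  have hΓ : 0 < Gamma (α + 1) := Gamma_pos_of_pos (by linarith)
  have hm : 0 < mAB β (α + 1) (π - θ) := mAB_pos β (α + 1) ⟨hφ, by linarith⟩
  gcongr
  · have : 0 < (L : ℝ) + (α + β + 2) / 2 := by linarith
    positivity
  · exact le_add_of_nonneg_left (by positivity)
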